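/- arXiv:1011.4691 — 4 statements merged into one kernel-verified Lean document; each statement's English description precedes it below -/
import Mathlib

section
/- Let N ≥ 2 and let Ω ⊆ ℝ^N be a nonempty open set. Let g : Ω × (0,∞) → (0,∞) be continuous such that for each x ∈ Ω the function t ↦ g(x,t) is strictly decreasing. Suppose u, v : Ω → ℝ are twice continuously differentiable positive functions satisfying Δu(x) + g(x,u(x)) ≤ 0 ≤ Δv(x) + g(x,v(x)) for all x ∈ Ω. Assume that for every y ∈ ∂Ω, limsup_{x→y, x∈Ω} (v(x) − u(x)) ≤ 0, and, in case Ω is unbounded, also limsup_{|x|→∞, x∈Ω} (v(x) − u(x)) ≤ 0. Then u(x) ≥ v(x) for all x ∈ Ω. -/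
open Metric Set MeasureTheory Filter

noncomputable def laplacian {N : ℕ} (u : EuclideanSpace ℝ (Fin N) → ℝ)
    (x : EuclideanSpace ℝ (Fin N)) : ℝ :=
  ∑ i, iteratedFDeriv ℝ 2 u x ![EuclideanSpace.single i 1, EuclideanSpace.single i 1]

lemma second_deriv_nonpos_of_localMax {f : ℝ → ℝ} {a : ℝ} (h : IsLocalMax f a)
    (hc : ContinuousAt f a) : deriv (deriv f) a ≤ 0 := by
  by_contra! hpos
  have hmin := isLocalMin_of_deriv_deriv_pos hpos h.deriv_eq_zero hc
  have heq : f =ᶠ[nhds a] fun _ => f a := by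
    filter_upwards [h, hmin] with t h1 h2
    exact le_antisymm h1 h2
  have h2 : deriv (deriv f) a = 0 := by
    rw [heq.deriv.deriv_eq]
    simp
  linarith

lemma iteratedFDeriv_nonpos_of_localMax {E : Type*} [NormedAddCommGroup E] [NormedSpace ℝ E]
    {w : E → ℝ} {x : E} (hw : ContDiffAt ℝ 2 w x) (h : IsLocalMax w x) (e : E) :
    iteratedFDeriv ℝ 2 w x ![e, e] ≤ 0 := by
  set L : ℝ → E := fun t => x + t • e with hL
  have hLd : ∀ t, HasDerivAt L e t := fun t => by
    simpa [hL] using ((hasDerivAt_id t).smul_const e).const_add x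
  have hL0 : L 0 = x := by simp [hL]
  have hLc : Tendsto L (nhds 0) (nhds x) := by
    have := (hLd 0).continuousAt.tendsto
    rwa [hL0] at this
  have hev : ∀ᶠ y in nhds x, DifferentiableAt ℝ w y := by
    filter_upwards [hw.eventually (by simp)] with y hy
    exact hy.differentiableAt (by norm_num)
  have hd1 : deriv (w ∘ L) =ᶠ[nhds 0] fun t => fderiv ℝ w (L t) e := by
    filter_upwards [hLc.eventually hev] with t ht
    exact (ht.hasFDerivAt.comp_hasDerivAt t (hLd t)).deriv
  have hf2 : DifferentiableAt ℝ (fderiv ℝ w) (L 0) := by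
    rw [hL0]
    exact (hw.fderiv_right (m := 1) (by norm_num)).differentiableAt (by norm_num)
  have hd2 : deriv (deriv (w ∘ L)) 0 = fderiv ℝ (fderiv ℝ w) x e e := by
    rw [hd1.deriv_eq]
    have := (hf2.hasFDerivAt.comp_hasDerivAt 0 (hLd 0)).clm_apply (hasDerivAt_const 0 e)
    rw [hL0] at this
    simpa using this.deriv
  have hmax : IsLocalMax (w ∘ L) 0 := by
    have h' : ∀ᶠ y in nhds x, w y ≤ w x := h
    filter_upwards [hLc.eventually h'] with t ht
    simpa [hL0] using ht
  have hcont : ContinuousAt (w ∘ L) 0 := by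
    apply ContinuousAt.comp
    · rw [hL0]; exact hw.continuousAt
    · exact (hLd 0).continuousAt
  have := second_deriv_nonpos_of_localMax hmax hcont
  rw [hd2] at this
  rw [iteratedFDeriv_two_apply]
  simpa using this

/-- Lemma 2.1 (comparison principle). -/
theorem statement_0 {N : ℕ} (hN : 2 ≤ N)
    (Ω : Set (EuclideanSpace ℝ (Fin N))) (hΩ : IsOpen Ω) (hne : Ω.Nonempty)
    (g : EuclideanSpace ℝ (Fin N) → ℝ → ℝ)
    (hg_cont : ContinuousOn (fun p : (EuclideanSpace ℝ (Fin N)) × ℝ => g p.1 p.2)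
      (Ω ×ˢ Ioi (0:ℝ)))
    (hg_pos : ∀ x ∈ Ω, ∀ t : ℝ, 0 < t → 0 < g x t)
    (hg_anti : ∀ x ∈ Ω, StrictAntiOn (g x) (Ioi (0:ℝ)))
    (u v : EuclideanSpace ℝ (Fin N) → ℝ)
    (hu : ContDiffOn ℝ 2 u Ω) (hv : ContDiffOn ℝ 2 v Ω)
    (hupos : ∀ x ∈ Ω, 0 < u x) (hvpos : ∀ x ∈ Ω, 0 < v x)
    (hsub : ∀ x ∈ Ω, laplacian u x + g x (u x) ≤ 0)
    (hsup : ∀ x ∈ Ω, 0 ≤ laplacian v x + g x (v x))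
    (hbd : ∀ y ∈ frontier Ω, ∀ ε : ℝ, 0 < ε → ∀ᶠ x in nhdsWithin y Ω, v x - u x ≤ ε)
    (hinf : ¬ Bornology.IsBounded Ω → ∀ ε : ℝ, 0 < ε →
      ∀ᶠ x in Filter.cocompact (EuclideanSpace ℝ (Fin N)) ⊓ Filter.principal Ω,
        v x - u x ≤ ε) :
    ∀ x ∈ Ω, v x ≤ u x := by
  intro x₀ hx₀
  by_contra! hlt
  set w : EuclideanSpace ℝ (Fin N) → ℝ := v - u with hw
  set c : ℝ := w x₀ with hc
  have hcpos : 0 < c := by simp [hc, hw, hlt]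
  have hwc : ContinuousOn w Ω := hv.continuousOn.sub hu.continuousOn
  set S := {x | x ∈ Ω ∧ c ≤ w x} with hS
  have hclosed : IsClosed S := by
    rw [← closure_subset_iff_isClosed]
    intro y hy
    have hfr : ∃ᶠ x in nhds y, x ∈ S := mem_closure_iff_frequently.1 hy
    have hyc : y ∈ closure Ω := closure_mono (fun x hx => hx.1) hy
    by_cases hyΩ : y ∈ Ω
    · refine ⟨hyΩ, ?_⟩
      by_contra! hlt'
      have hev : ∀ᶠ x in nhds y, w x < c :=
        (hwc.continuousAt (hΩ.mem_nhds hyΩ)).eventually (eventually_lt_nhds hlt')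
      obtain ⟨x, hx, hx'⟩ := (hfr.and_eventually hev).exists
      exact absurd hx.2 (not_le.2 hx')
    · exfalso
      have hyf : y ∈ frontier Ω := by
        rw [hΩ.frontier_eq]; exact ⟨hyc, hyΩ⟩
      have hev := eventually_nhdsWithin_iff.1 (hbd y hyf (c / 2) (by linarith))
      obtain ⟨x, hx, hx'⟩ := (hfr.and_eventually hev).exists
      have h1 := hx' hx.1
      have h2 : c ≤ v x - u x := hx.2
      linarith
  have hSc : IsCompact S := by
    by_cases hb : Bornology.IsBounded Ω
    · exact Metric.isCompact_of_isClosed_isBounded hclosed (hb.subset fun x hx => hx.1)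
    · have hev := eventually_inf_principal.1 (hinf hb (c / 2) (by linarith))
      obtain ⟨K, hK, hKs⟩ := mem_cocompact.1 hev
      refine hK.of_isClosed_subset hclosed fun x hx => ?_
      by_contra hxK
      have h1 : v x - u x ≤ c / 2 := hKs hxK hx.1
      have h2 : c ≤ v x - u x := hx.2
      linarith
  obtain ⟨z, hz, hzmax⟩ := hSc.exists_isMaxOn ⟨x₀, hx₀, le_refl _⟩
    (hwc.mono fun x hx => hx.1)
  have hmax : IsLocalMax w z := by
    filter_upwards [hΩ.mem_nhds hz.1] with x hx
    by_cases hxc : c ≤ w x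
    · exact hzmax ⟨hx, hxc⟩
    · exact (not_le.1 hxc).le.trans hz.2
  have hvz := hv.contDiffAt (hΩ.mem_nhds hz.1)
  have huz := hu.contDiffAt (hΩ.mem_nhds hz.1)
  have hlap : laplacian v z - laplacian u z ≤ 0 := by
    unfold laplacian
    rw [← Finset.sum_sub_distrib]
    refine Finset.sum_nonpos fun i _ => ?_
    have := iteratedFDeriv_nonpos_of_localMax (w := v - u) (hvz.sub huz) hmax (EuclideanSpace.single i 1)
    rw [iteratedFDeriv_sub_apply hvz huz] at this
    simpa using this
  have hvu : u z < v z := by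
    have h2 : c ≤ v z - u z := hz.2
    linarith
  have := hg_anti z hz.1 (hupos z hz.1) (hvpos z hz.1) hvu
  have := hsub z hz.1
  have := hsup z hz.1
  linarith
end

section
/- Let N ≥ 3. Let φ : (0,∞) → [0,∞) and f : (0,∞) → (0,∞) be continuous functions such that (i) liminf_{t→0⁺} f(t) > 0, (ii) there exists r₁ > 0 such that φ is monotone (either nonincreasing or nondecreasing) on [r₁,∞), and (iii) ∫₁^∞ r·φ(r) dr = ∞. Then for every nonempty compact set K ⊂ ℝ^N there is no C² positive solution u of the inequality −Δu ≥ φ(δ_K(x)) f(u) on ℝ^N \ K. -/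
open Metric Set MeasureTheory Filter

lemma second_deriv_nonneg {p p1 : ℝ → ℝ} {p2 : ℝ} (hmin : IsLocalMin p 0)
    (h1 : ∀ᶠ s in nhds (0:ℝ), HasDerivAt p (p1 s) s) (h2 : HasDerivAt p1 p2 0) : 0 ≤ p2 := by
  by_contra hneg
  push Not at hneg
  have e1 : deriv p =ᶠ[nhds 0] p1 := h1.mono fun s hs => hs.deriv
  have e2 : deriv (deriv p) 0 = p2 := by rw [e1.deriv_eq]; exact h2.deriv
  have hmax : IsLocalMax p 0 :=
    isLocalMax_of_deriv_deriv_neg (by rw [e2]; exact hneg) hmin.deriv_eq_zero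
      h1.self_of_nhds.continuousAt
  have hc : p =ᶠ[nhds 0] fun _ => p 0 := by
    filter_upwards [hmin, hmax] with s hs1 hs2
    exact le_antisymm hs2 hs1
  have : deriv (deriv p) 0 = 0 := by
    rw [hc.deriv.deriv_eq]; simp
  linarith

lemma laplacian_touch {N : ℕ} {u : EuclideanSpace ℝ (Fin N) → ℝ} {x : EuclideanSpace ℝ (Fin N)}
    {g g1 : ℝ → ℝ} {g2 : ℝ} (hu : ContDiffAt ℝ 2 u x)
    (hg : ∀ᶠ q in nhds (‖x‖ ^ 2), HasDerivAt g (g1 q) q) (hg1 : HasDerivAt g1 g2 (‖x‖ ^ 2))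
    (hmin : IsLocalMin (fun y => u y - g (‖y‖ ^ 2)) x) :
    4 * ‖x‖ ^ 2 * g2 + 2 * N * g1 (‖x‖ ^ 2) ≤ laplacian u x := by
  have key : ∀ i : Fin N, 4 * (x i) ^ 2 * g2 + 2 * g1 (‖x‖ ^ 2) ≤
      iteratedFDeriv ℝ 2 u x ![EuclideanSpace.single i 1, EuclideanSpace.single i 1] := by
    intro i
    set e : EuclideanSpace ℝ (Fin N) := EuclideanSpace.single i 1 with he
    have hl : ∀ s : ℝ, HasDerivAt (fun s : ℝ => x + s • e) e s := by
      intro s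
      simpa using ((hasDerivAt_id s).smul_const e).const_add x
    have hl0 : Tendsto (fun s : ℝ => x + s • e) (nhds 0) (nhds x) := by
      have := (hl 0).continuousAt.tendsto
      simpa using this
    have hq : ∀ s : ℝ, ‖x + s • e‖ ^ 2 = ‖x‖ ^ 2 + 2 * s * x i + s ^ 2 := by
      intro s
      rw [norm_add_sq_real, inner_smul_right, norm_smul, he, EuclideanSpace.inner_single_right]
      simp
      ring
    have hqd : ∀ s : ℝ, HasDerivAt (fun s : ℝ => ‖x + s • e‖ ^ 2) (2 * x i + 2 * s) s := by
      intro s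
      simp only [hq]
      have := ((((hasDerivAt_id s).const_mul 2).mul_const (x i)).const_add (‖x‖^2)).add
        (hasDerivAt_pow 2 s)
      refine HasDerivAt.congr_deriv this ?_
      simp
    have hq0 : Tendsto (fun s : ℝ => ‖x + s • e‖ ^ 2) (nhds 0) (nhds (‖x‖ ^ 2)) := by
      have := (hqd 0).continuousAt.tendsto
      simpa using this
    have hdiff : ∀ᶠ y in nhds x, DifferentiableAt ℝ u y := by
      have : ∀ᶠ y in nhds x, ContDiffAt ℝ 2 u y := hu.eventually (by simp)
      exact this.mono fun y hy => hy.differentiableAt (by norm_num)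
    have hdd : DifferentiableAt ℝ (fderiv ℝ u) x :=
      (hu.fderiv_right (m := 1) (by norm_num)).differentiableAt (by norm_num)
    have hmin' : IsLocalMin (fun s : ℝ => u (x + s • e) - g (‖x + s • e‖ ^ 2)) 0 := by
      have := hl0.eventually hmin
      filter_upwards [this] with s hs
      simpa using hs
    have h1 : ∀ᶠ s in nhds (0:ℝ), HasDerivAt (fun s : ℝ => u (x + s • e) - g (‖x + s • e‖ ^ 2))
        (fderiv ℝ u (x + s • e) e - g1 (‖x + s • e‖ ^ 2) * (2 * x i + 2 * s)) s := by
      filter_upwards [hl0.eventually hdiff, hq0.eventually hg] with s hs1 hs2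
      exact (hs1.hasFDerivAt.comp_hasDerivAt s (hl s)).sub
        (HasDerivAt.comp s (h₂ := g) hs2 (hqd s))
    have h2 : HasDerivAt (fun s : ℝ =>
        fderiv ℝ u (x + s • e) e - g1 (‖x + s • e‖ ^ 2) * (2 * x i + 2 * s))
        (fderiv ℝ (fderiv ℝ u) x e e - (g2 * (2 * x i) * (2 * x i) + g1 (‖x‖ ^ 2) * 2)) 0 := by
      have hx0 : x + (0:ℝ) • e = x := by simp
      have a1 : HasDerivAt (fun s : ℝ => fderiv ℝ u (x + s • e))
          (fderiv ℝ (fderiv ℝ u) x e) 0 := by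
        have hdd' : HasFDerivAt (fderiv ℝ u) (fderiv ℝ (fderiv ℝ u) x) (x + (0:ℝ) • e) := by
          rw [hx0]; exact hdd.hasFDerivAt
        exact hdd'.comp_hasDerivAt 0 (hl 0)
      have a2 : HasDerivAt (fun s : ℝ => fderiv ℝ u (x + s • e) e)
          (fderiv ℝ (fderiv ℝ u) x e e) 0 := by
        have := a1.clm_apply (hasDerivAt_const 0 e)
        simpa using this
      have a3 : HasDerivAt (fun s : ℝ => g1 (‖x + s • e‖ ^ 2)) (g2 * (2 * x i)) 0 := by
        have hg1' : HasDerivAt g1 g2 (‖x + (0:ℝ) • e‖ ^ 2) := by rw [hx0]; exact hg1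
        have := HasDerivAt.comp (0:ℝ) hg1' (hqd 0)
        simpa [Function.comp_def] using this
      have a4 : HasDerivAt (fun s : ℝ => 2 * x i + 2 * s) 2 0 := by
        simpa using ((hasDerivAt_id (0:ℝ)).const_mul 2).const_add (2 * x i)
      refine HasDerivAt.congr_deriv (a2.sub (a3.mul a4)) ?_
      simp
    have := second_deriv_nonneg hmin' h1 h2
    rw [iteratedFDeriv_two_apply]
    simp only [Matrix.cons_val_zero, Matrix.cons_val_one]
    nlinarith
  unfold laplacian
  refine le_trans (le_of_eq ?_) (Finset.sum_le_sum fun i _ => key i)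
  rw [Finset.sum_add_distrib, EuclideanSpace.real_norm_sq_eq, ← Finset.sum_mul, ← Finset.mul_sum]
  simp
  ring

lemma exF {q0 β : ℝ} (hq0 : 0 < q0) (hβ : 1 / 2 ≤ β) {Ψ : ℝ → ℝ} (hc : Continuous Ψ)
    (hnn : ∀ s, 0 ≤ Ψ s) (hunb : ∀ B : ℝ, ∃ Q, q0 ≤ Q ∧ B ≤ ∫ s in q0..Q, Ψ s) :
    ∃ F F1 F2 : ℝ → ℝ, (∀ q, 0 < q → HasDerivAt F (F1 q) q) ∧
      (∀ q, 0 < q → HasDerivAt F1 (F2 q) q) ∧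
      (∀ q, 0 < q → q * F2 q + (β + 1) * F1 q = β * Ψ q) ∧
      (∀ q, q0 ≤ q → 0 ≤ F q) ∧ (∀ B C : ℝ, ∃ Q, C ≤ Q ∧ B ≤ F Q) := by
  have hβ0 : 0 < β := by linarith
  have hcβ : Continuous fun s : ℝ => s ^ β * Ψ s :=
    (Real.continuous_rpow_const hβ0.le).mul hc
  set H : ℝ → ℝ := fun q => ∫ s in q0..q, Ψ s with hH
  set G : ℝ → ℝ := fun q => ∫ s in q0..q, s ^ β * Ψ s with hG
  have dH : ∀ q, HasDerivAt H (Ψ q) q := fun q => (hc.integral_hasStrictDerivAt q0 q).hasDerivAt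
  have dG : ∀ q, HasDerivAt G (q ^ β * Ψ q) q :=
    fun q => (hcβ.integral_hasStrictDerivAt q0 q).hasDerivAt
  have hF : ∀ q, 0 < q → H q - q ^ (-β) * G q = ∫ s in q0..q, (1 - q ^ (-β) * s ^ β) * Ψ s := by
    intro q hq
    rw [hH, hG]
    simp only
    rw [← intervalIntegral.integral_const_mul, ← intervalIntegral.integral_sub
      (hc.intervalIntegrable _ _) ((show Continuous fun s : ℝ => q ^ (-β) * (s ^ β * Ψ s) from
        continuous_const.mul hcβ).intervalIntegrable _ _)]
    congr 1
    ext s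
    ring
  have hle : ∀ q s : ℝ, 0 < q → 0 ≤ s → s ≤ q → 0 ≤ 1 - q ^ (-β) * s ^ β := by
    intro q s hq hs hsq
    have h1 : q ^ (-β) * s ^ β ≤ q ^ (-β) * q ^ β := by gcongr
    rw [← Real.rpow_add hq] at h1
    simp at h1
    linarith
  have hci : ∀ q : ℝ, Continuous fun s : ℝ => (1 - q ^ (-β) * s ^ β) * Ψ s := fun q =>
    (continuous_const.sub (continuous_const.mul (Real.continuous_rpow_const hβ0.le))).mul hc
  refine ⟨fun q => H q - q ^ (-β) * G q, fun q => β * q ^ (-β - 1) * G q,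
    fun q => β * ((-β - 1) * q ^ (-β - 2)) * G q + β * q ^ (-β - 1) * (q ^ β * Ψ q),
    ?_, ?_, ?_, ?_, ?_⟩
  · intro q hq
    have := (dH q).sub ((Real.hasDerivAt_rpow_const (p := -β) (Or.inl hq.ne')).mul (dG q))
    refine HasDerivAt.congr_deriv this ?_
    have : q ^ (-β) * q ^ β = 1 := by rw [← Real.rpow_add hq]; simp
    linear_combination (-Ψ q) * this
  · intro q hq
    have := ((Real.hasDerivAt_rpow_const (p := -β - 1) (Or.inl hq.ne')).const_mul β).mul (dG q)
    refine HasDerivAt.congr_deriv this ?_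
    rw [show -β - 1 - 1 = -β - 2 by ring]
  · intro q hq
    have e1 : q * q ^ (-β - 2) = q ^ (-β - 1) := by
      rw [show -β - 1 = 1 + (-β - 2) by ring, Real.rpow_add hq, Real.rpow_one]
    have e2 : q * q ^ (-β - 1) * q ^ β = 1 := by
      rw [show q * q ^ (-β - 1) = q ^ (-β) by
        rw [show -β = 1 + (-β - 1) by ring, Real.rpow_add hq, Real.rpow_one]; ring_nf,
        ← Real.rpow_add hq]; simp
    linear_combination β * (-β - 1) * G q * e1 + β * Ψ q * e2
  · intro q hq
    simp only
    rw [hF q (by linarith)]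
    refine intervalIntegral.integral_nonneg hq fun s hs => ?_
    exact mul_nonneg (hle q s (by linarith) (by linarith [hs.1]) hs.2) (hnn s)
  · intro B C
    obtain ⟨Q, hQ, hB⟩ := hunb (2 * B)
    set Q' := max Q C with hQ'
    have hQQ' : Q ≤ Q' := le_max_left _ _
    have hCQ' : C ≤ Q' := le_max_right _ _
    have hpos : 0 < Q' := by linarith
    refine ⟨4 * Q', by linarith, ?_⟩
    simp only
    rw [hF _ (by linarith)]
    have m1 : ∫ s in q0..Q, (1 - (4 * Q') ^ (-β) * s ^ β) * Ψ s ≤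
        ∫ s in q0..(4 * Q'), (1 - (4 * Q') ^ (-β) * s ^ β) * Ψ s := by
      refine intervalIntegral.integral_mono_interval le_rfl hQ (by linarith) ?_
        ((hci _).intervalIntegrable _ _)
      refine (ae_restrict_iff' measurableSet_Ioc).2 (Eventually.of_forall fun s hs => ?_)
      exact mul_nonneg (hle _ s (by linarith) (by linarith [hs.1]) hs.2) (hnn s)
    have m2 : ∫ s in q0..Q, (1 / 2) * Ψ s ≤
        ∫ s in q0..Q, (1 - (4 * Q') ^ (-β) * s ^ β) * Ψ s := by
      refine intervalIntegral.integral_mono_on hQ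
        ((continuous_const.mul hc).intervalIntegrable _ _) ((hci _).intervalIntegrable _ _) ?_
      intro s hs
      refine mul_le_mul_of_nonneg_right ?_ (hnn s)
      have b1 : (4 * Q') ^ (-β) * s ^ β ≤ (4 * Q') ^ (-β) * Q' ^ β := by
        have : 0 ≤ s := by linarith [hs.1]
        have : s ≤ Q' := hs.2.trans hQQ'
        gcongr
      have b2 : (4 * Q') ^ (-β) * Q' ^ β = 4 ^ (-β) := by
        rw [Real.mul_rpow (by norm_num) hpos.le, mul_assoc, ← Real.rpow_add hpos]; simp
      have b3 : (4:ℝ) ^ (-β) ≤ 4 ^ (-(1/2) : ℝ) :=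
        Real.rpow_le_rpow_of_exponent_le (by norm_num) (by linarith)
      have b4 : (4:ℝ) ^ (-(1/2) : ℝ) = 1 / 2 := by
        rw [Real.rpow_neg (by norm_num), ← Real.sqrt_eq_rpow,
          show (4:ℝ) = 2 ^ 2 by norm_num, Real.sqrt_sq (by norm_num)]; norm_num
      linarith
    rw [intervalIntegral.integral_const_mul] at m2
    linarith

lemma f_lower {f : ℝ → ℝ} (hfcont : ContinuousOn f (Ioi (0:ℝ))) (hfpos : ∀ t : ℝ, 0 < t → 0 < f t)
    (hliminf : ∃ ε : ℝ, 0 < ε ∧ ∀ᶠ t in nhdsWithin (0:ℝ) (Ioi 0), ε ≤ f t) (M : ℝ) :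
    ∃ c, 0 < c ∧ ∀ t, 0 < t → t ≤ M → c ≤ f t := by
  obtain ⟨ε, hε, h⟩ := hliminf
  obtain ⟨δ, hδ, h⟩ := mem_nhdsGT_iff_exists_Ioo_subset.1 h
  have hδ : 0 < δ := hδ
  rcases le_or_gt δ M with hM | hM
  · obtain ⟨x, hx, hmin⟩ := (isCompact_Icc (a := δ) (b := M)).exists_isMinOn
      (nonempty_Icc.2 hM) (hfcont.mono fun t ht => lt_of_lt_of_le hδ ht.1)
    refine ⟨min ε (f x), lt_min hε (hfpos x (lt_of_lt_of_le hδ hx.1)), fun t ht htM => ?_⟩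
    rcases lt_or_ge t δ with h1 | h1
    · exact (min_le_left _ _).trans (h ⟨ht, h1⟩)
    · exact (min_le_right _ _).trans (hmin ⟨h1, htM⟩)
  · exact ⟨ε, hε, fun t ht htM => h ⟨ht, by linarith⟩⟩

lemma phi_unb {φ : ℝ → ℝ} (hφcont : ContinuousOn φ (Ioi (0:ℝ)))
    (hφnonneg : ∀ r : ℝ, 0 < r → 0 ≤ φ r)
    (hdiv : ¬ IntegrableOn (fun r : ℝ => r * φ r) (Ioi (1:ℝ)) volume)
    {A : ℝ} (hA : 1 ≤ A) (B : ℝ) : ∃ R, A ≤ R ∧ B ≤ ∫ r in A..R, r * φ r := by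
  by_contra hcon
  push Not at hcon
  apply hdiv
  have hcont : ContinuousOn (fun r : ℝ => r * φ r) (Ioi 0) := continuousOn_id.mul hφcont
  have hIcc : ∀ a b : ℝ, 0 < a → IntegrableOn (fun r : ℝ => r * φ r) (Icc a b) volume := by
    intro a b ha
    exact (hcont.mono fun t ht => lt_of_lt_of_le ha ht.1).integrableOn_Icc
  rw [← Ioc_union_Ioi_eq_Ioi hA]
  refine ((hIcc 1 A one_pos).mono_set Ioc_subset_Icc_self).union ?_
  refine integrableOn_Ioi_of_intervalIntegral_norm_bounded (l := atTop) (b := id) B A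
    (fun i => (hIcc A i (by linarith)).mono_set Ioc_subset_Icc_self) tendsto_id ?_
  filter_upwards [eventually_ge_atTop A] with R hR
  refine le_trans (le_of_eq ?_) (hcon R hR).le
  refine intervalIntegral.integral_congr fun r hr => ?_
  rw [id, uIcc_of_le hR] at hr
  have : 0 < r := by linarith [hr.1]
  exact Real.norm_of_nonneg (mul_nonneg this.le (hφnonneg r this))

lemma psi_unb {φ : ℝ → ℝ} (hφcont : ContinuousOn φ (Ioi (0:ℝ)))
    (hφnonneg : ∀ r : ℝ, 0 < r → 0 ≤ φ r)
    (hdiv : ¬ IntegrableOn (fun r : ℝ => r * φ r) (Ioi (1:ℝ)) volume)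
    {r0 d : ℝ} (hr0 : 0 < r0) (h1 : 1 ≤ r0 + d) (h2 : 2 * d ≤ r0 + d)
    {Ψ : ℝ → ℝ} (hc : Continuous Ψ) (hΨ : ∀ s, Ψ s = φ (max (√s) r0 + d)) (B : ℝ) :
    ∃ Q, r0 ^ 2 ≤ Q ∧ B ≤ ∫ s in (r0 ^ 2)..Q, Ψ s := by
  obtain ⟨R, hR, hB⟩ := phi_unb hφcont hφnonneg hdiv h1 B
  refine ⟨(R - d) ^ 2, ?_, ?_⟩
  · have : r0 ≤ R - d := by linarith
    gcongr
  have hsub := intervalIntegral.integral_comp_mul_deriv'' (a := r0 + d) (b := R)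
    (f := fun τ => (τ - d) ^ 2) (f' := fun τ => 2 * (τ - d)) (g := Ψ)
    (by fun_prop) (fun x _ => by
      have := ((hasDerivAt_id x).sub_const d).pow 2
      simp at this
      exact this.hasDerivWithinAt) (by fun_prop) hc.continuousOn
  simp only [add_sub_cancel_right] at hsub
  rw [← hsub]
  refine hB.trans ?_
  refine intervalIntegral.integral_mono_on hR ?_ ?_ ?_
  · refine ContinuousOn.intervalIntegrable ?_
    rw [uIcc_of_le hR]
    exact continuousOn_id.mul (hφcont.mono fun t ht => show (0:ℝ) < t by linarith [ht.1])
  · refine Continuous.intervalIntegrable ?_ _ _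
    exact (hc.comp (by fun_prop)).mul (by fun_prop)
  · intro τ hτ
    have e : max (√((τ - d) ^ 2)) r0 + d = τ := by
      rw [Real.sqrt_sq (by linarith [hτ.1]), max_eq_left (by linarith [hτ.1])]; ring
    simp only [Function.comp, hΨ, e]
    rw [mul_comm]
    exact mul_le_mul_of_nonneg_left (by linarith [hτ.1]) (hφnonneg τ (by linarith [hτ.1]))

/-- Comparison argument in an exterior domain. -/
lemma core {N : ℕ} (hN : 3 ≤ N) {f Ψ : ℝ → ℝ} {r0 : ℝ} (hr0 : 0 < r0)
    (hfl : ∀ M : ℝ, ∃ c, 0 < c ∧ ∀ t, 0 < t → t ≤ M → c ≤ f t)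
    (hc : Continuous Ψ) (hnn : ∀ s, 0 ≤ Ψ s)
    (hunb : ∀ B : ℝ, ∃ Q, r0 ^ 2 ≤ Q ∧ B ≤ ∫ s in (r0 ^ 2)..Q, Ψ s)
    {u : EuclideanSpace ℝ (Fin N) → ℝ}
    (hu : ∀ x, r0 ≤ ‖x‖ → ContDiffAt ℝ 2 u x)
    (hpos : ∀ x, r0 ≤ ‖x‖ → 0 < u x)
    (hineq : ∀ x, r0 ≤ ‖x‖ → Ψ (‖x‖ ^ 2) * f (u x) ≤ -laplacian u x) : False := by
  have hN' : (3:ℝ) ≤ N := by exact_mod_cast hN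
  set q0 := r0 ^ 2 with hq0d
  have hq0 : 0 < q0 := by positivity
  set β : ℝ := N / 2 - 1 with hβd
  have hβ : 1 / 2 ≤ β := by rw [hβd]; linarith
  obtain ⟨F, F1, F2, hF, hF1, hF2, hFnn, hFunb⟩ := exF hq0 hβ hc hnn hunb
  have hle : ∀ x : EuclideanSpace ℝ (Fin N), q0 ≤ ‖x‖ ^ 2 → r0 ≤ ‖x‖ := fun x hx =>
    le_of_sq_le_sq hx (norm_nonneg x)
  set q1 : ℝ := 2 * q0 with hq1
  let x1 : EuclideanSpace ℝ (Fin N) := EuclideanSpace.single ⟨0, by omega⟩ (√q1)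
  have hx1 : ‖x1‖ ^ 2 = q1 := by
    simp only [x1, EuclideanSpace.norm_single, Real.norm_eq_abs, sq_abs]
    exact Real.sq_sqrt (by positivity)
  set b : ℝ := q0 ^ (-(1/4) : ℝ) with hb
  have hbpos : 0 < b := Real.rpow_pos_of_pos hq0 _
  have hq1b : q1 ^ (-(1/4) : ℝ) < b :=
    Real.rpow_lt_rpow_of_neg hq0 (by linarith) (by norm_num)
  set t1 : ℝ := b - q1 ^ (-(1/4) : ℝ) with ht1
  have ht1pos : 0 < t1 := by linarith
  have hux1 : 0 < u x1 := hpos x1 (hle x1 (by rw [hx1]; linarith))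
  set a : ℝ := (u x1 + 2) / t1 with ha
  have hapos : 0 < a := by positivity
  obtain ⟨c, hcpos, hcf⟩ := hfl (a * b)
  set μ : ℝ := min (c / (4 * β)) (1 / (F q1 + 1)) with hμ
  have hFq1 : 0 ≤ F q1 := hFnn q1 (by linarith)
  have hβpos : 0 < β := by linarith
  have hμpos : 0 < μ := lt_min (by positivity) (by positivity)
  have hμ1 : μ * (4 * β) ≤ c := by
    rw [← le_div_iff₀ (by positivity)]; exact min_le_left _ _
  have hμ2 : μ * F q1 ≤ 1 := by
    have : μ * (F q1 + 1) ≤ 1 := by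
      rw [← le_div_iff₀ (by positivity)]; exact min_le_right _ _
    linarith
  obtain ⟨Q, hQ1, hQ⟩ := hFunb (a * b / μ) q1
  have hQ' : a * b ≤ μ * F Q := by
    rw [div_le_iff₀ hμpos] at hQ; linarith
  set g : ℝ → ℝ := fun q => a * (b - q ^ (-(1/4) : ℝ)) - μ * F q with hg
  set g1 : ℝ → ℝ := fun q => a * ((1/4) * q ^ (-(5/4) : ℝ)) - μ * F1 q with hg1
  set g2 : ℝ → ℝ := fun q => a * (-(5/16) * q ^ (-(9/4) : ℝ)) - μ * F2 q with hg2
  have dg : ∀ q, 0 < q → HasDerivAt g (g1 q) q := by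
    intro q hq
    have := (((Real.hasDerivAt_rpow_const (p := -(1/4)) (Or.inl hq.ne')).const_sub b).const_mul
      a).sub ((hF q hq).const_mul μ)
    refine HasDerivAt.congr_deriv this ?_
    rw [hg1, show (-(1/4) - 1 : ℝ) = -(5/4) by norm_num]
    ring
  have dg1 : ∀ q, 0 < q → HasDerivAt g1 (g2 q) q := by
    intro q hq
    have := (((Real.hasDerivAt_rpow_const (p := -(5/4)) (Or.inl hq.ne')).const_mul (1/4)).const_mul
      a).sub ((hF1 q hq).const_mul μ)
    refine HasDerivAt.congr_deriv this ?_
    rw [hg2, show (-(5/4) - 1 : ℝ) = -(9/4) by norm_num]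
    ring
  have hlap : ∀ q, 0 < q → -(c * Ψ q) < 4 * q * g2 q + 2 * N * g1 q := by
    intro q hq
    have e1 : q * q ^ (-(9/4) : ℝ) = q ^ (-(5/4) : ℝ) := by
      rw [show (-(5/4) : ℝ) = 1 + -(9/4) by norm_num, Real.rpow_add hq, Real.rpow_one]
    have e2 : 0 < a * q ^ (-(5/4) : ℝ) * (N / 2 - 5 / 4) :=
      mul_pos (mul_pos hapos (Real.rpow_pos_of_pos hq _)) (by linarith)
    have e3 : 4 * q * g2 q + 2 * N * g1 q =
        a * q ^ (-(5/4) : ℝ) * (N / 2 - 5 / 4) - μ * (4 * β) * Ψ q := by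
      have hn : (N : ℝ) = 2 * (β + 1) := by rw [hβd]; ring
      simp only [hg1, hg2]
      rw [hn]
      linear_combination (-(5/4) * a) * e1 - 4 * μ * hF2 q hq
    have e4 : μ * (4 * β) * Ψ q ≤ c * Ψ q := mul_le_mul_of_nonneg_right hμ1 (hnn q)
    linarith
  have hgle : ∀ q, q0 ≤ q → g q ≤ a * b := by
    intro q hq
    have h1 : 0 ≤ a * q ^ (-(1/4) : ℝ) := by
      have : 0 < q := by linarith
      positivity
    have h2 : 0 ≤ μ * F q := mul_nonneg hμpos.le (hFnn q hq)
    simp only [hg]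
    linarith
  set S : Set (EuclideanSpace ℝ (Fin N)) := {x | q0 ≤ ‖x‖ ^ 2 ∧ ‖x‖ ^ 2 ≤ Q} with hS
  have hScomp : IsCompact S := by
    refine Metric.isCompact_of_isClosed_isBounded ?_ ?_
    · have hn : Continuous fun y : EuclideanSpace ℝ (Fin N) => ‖y‖ ^ 2 := by fun_prop
      exact (isClosed_le continuous_const hn).inter (isClosed_le hn continuous_const)
    · refine (Metric.isBounded_closedBall (x := 0) (r := √Q)).subset fun x hx => ?_
      rw [mem_closedBall_zero_iff]
      exact Real.le_sqrt_of_sq_le hx.2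
  have hx1S : x1 ∈ S := ⟨by rw [hx1]; linarith, by rw [hx1]; exact hQ1⟩
  have hcontw : ContinuousOn (fun y => u y - g (‖y‖ ^ 2)) S := by
    intro x hx
    have h1 : ContinuousAt u x := (hu x (hle x hx.1)).continuousAt
    have h2 : ContinuousAt g (‖x‖ ^ 2) := (dg _ (by linarith [hx.1])).continuousAt
    have h3 : ContinuousAt (fun y : EuclideanSpace ℝ (Fin N) => ‖y‖ ^ 2) x := by fun_prop
    exact (h1.sub (ContinuousAt.comp (g := g) h2 h3)).continuousWithinAt
  obtain ⟨x, hxS, hxmin⟩ := hScomp.exists_isMinOn ⟨x1, hx1S⟩ hcontw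
  have hwx1 : u x1 - g (‖x1‖ ^ 2) < 0 := by
    rw [hx1]
    have : g q1 = u x1 + 2 - μ * F q1 := by
      simp only [hg]
      rw [← ht1, ha, div_mul_cancel₀ _ ht1pos.ne']
    linarith
  have hwx : u x - g (‖x‖ ^ 2) < 0 := lt_of_le_of_lt (hxmin hx1S) hwx1
  have hrx := hle x hxS.1
  have hux := hpos x hrx
  have hxl : q0 < ‖x‖ ^ 2 := by
    refine lt_of_le_of_ne hxS.1 fun h => ?_
    rw [← h] at hwx
    have : g q0 = - (μ * F q0) := by simp only [hg, ← hb]; ring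
    have h2 : 0 ≤ μ * F q0 := mul_nonneg hμpos.le (hFnn q0 le_rfl)
    linarith
  have hxr : ‖x‖ ^ 2 < Q := by
    refine lt_of_le_of_ne hxS.2 fun h => ?_
    rw [h] at hwx
    have h1 : 0 ≤ a * Q ^ (-(1/4) : ℝ) := by
      have : 0 < Q := by linarith
      positivity
    have : g Q = a * b - a * Q ^ (-(1/4) : ℝ) - μ * F Q := by simp only [hg]; ring
    linarith
  have hSn : S ∈ nhds x := by
    have h3 : ContinuousAt (fun y : EuclideanSpace ℝ (Fin N) => ‖y‖ ^ 2) x := by fun_prop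
    filter_upwards [h3.eventually (lt_mem_nhds hxl), h3.eventually (gt_mem_nhds hxr)] with y h1 h2
    exact ⟨h1.le, h2.le⟩
  have hq : 0 < ‖x‖ ^ 2 := by linarith
  have htouch := laplacian_touch (hu x hrx) ((lt_mem_nhds hq).mono fun q hq => dg q hq)
    (dg1 _ hq) (hxmin.isLocalMin hSn)
  have h1 := hlap _ hq
  have h2 := hineq x hrx
  have h3 := hcf (u x) hux (by linarith [hgle _ hxS.1])
  have h4 := mul_le_mul_of_nonneg_left h3 (hnn (‖x‖ ^ 2))
  linarith

/-- Theorem 3.1: nonexistence when the weight is not integrable at infinity. -/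
theorem statement_3 {N : ℕ} (hN : 3 ≤ N) (φ f : ℝ → ℝ)
    (hφcont : ContinuousOn φ (Ioi (0:ℝ))) (hφnonneg : ∀ r : ℝ, 0 < r → 0 ≤ φ r)
    (hfcont : ContinuousOn f (Ioi (0:ℝ))) (hfpos : ∀ t : ℝ, 0 < t → 0 < f t)
    (hliminf : ∃ ε : ℝ, 0 < ε ∧ ∀ᶠ t in nhdsWithin (0:ℝ) (Ioi 0), ε ≤ f t)
    (hmono : ∃ r₁ : ℝ, 0 < r₁ ∧ (MonotoneOn φ (Ici r₁) ∨ AntitoneOn φ (Ici r₁)))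
    (hdiv : ¬ IntegrableOn (fun r : ℝ => r * φ r) (Ioi (1:ℝ)) volume)
    (K : Set (EuclideanSpace ℝ (Fin N))) (hK : IsCompact K) (hKne : K.Nonempty) :
    ¬ ∃ u : EuclideanSpace ℝ (Fin N) → ℝ,
        ContDiffOn ℝ 2 u Kᶜ ∧
        ∀ x ∈ Kᶜ, 0 < u x ∧ φ (infDist x (frontier K)) * f (u x) ≤ -laplacian u x := by
  rintro ⟨u, huC, hu⟩
  obtain ⟨r₁, hr₁, hmon⟩ := hmono
  obtain ⟨R, hR⟩ := hK.isBounded.subset_closedBall 0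
  set R0 := max R 1 with hR0
  have hR0pos : 1 ≤ R0 := le_max_right _ _
  have hKR : ∀ y ∈ K, ‖y‖ ≤ R0 := fun y hy =>
    (mem_closedBall_zero_iff.1 (hR hy)).trans (le_max_left _ _)
  haveI : Nonempty (Fin N) := ⟨⟨0, by omega⟩⟩
  have hKuniv : K ≠ univ := fun h => noncompact_univ (EuclideanSpace ℝ (Fin N)) (h ▸ hK)
  have hfr : (frontier K).Nonempty := nonempty_frontier_iff.2 ⟨hKne, hKuniv⟩
  have hfrK : frontier K ⊆ K := hK.isClosed.frontier_subset
  set r0 := 3 * R0 + r₁ + 1 with hr0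
  have hdist1 : ∀ x : EuclideanSpace ℝ (Fin N), ‖x‖ - R0 ≤ infDist x (frontier K) := by
    intro x
    rw [Metric.le_infDist hfr]
    intro y hy
    have := norm_sub_norm_le x y
    rw [dist_eq_norm]
    linarith [hKR y (hfrK hy)]
  have hdist2 : ∀ x : EuclideanSpace ℝ (Fin N), infDist x (frontier K) ≤ ‖x‖ + R0 := by
    intro x
    obtain ⟨y, hy⟩ := hfr
    refine (Metric.infDist_le_dist_of_mem hy).trans ?_
    rw [dist_eq_norm]
    linarith [hKR y (hfrK hy), norm_sub_le x y]
  have hd : ∃ d : ℝ, |d| ≤ R0 ∧ ∀ x : EuclideanSpace ℝ (Fin N), r0 ≤ ‖x‖ →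
      φ (‖x‖ + d) ≤ φ (infDist x (frontier K)) := by
    rcases hmon with h | h
    · refine ⟨-R0, by rw [abs_neg, abs_of_nonneg (by linarith)], fun x hx => ?_⟩
      have := hdist1 x
      exact h (show r₁ ≤ _ by linarith) (show r₁ ≤ _ by linarith) (by linarith)
    · refine ⟨R0, by rw [abs_of_nonneg (by linarith)], fun x hx => ?_⟩
      have := hdist1 x
      exact h (show r₁ ≤ _ by linarith) (show r₁ ≤ _ by linarith) (hdist2 x)
  obtain ⟨d, hdR, hd⟩ := hd
  obtain ⟨hd1, hd2⟩ := abs_le.1 hdR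
  set Ψ : ℝ → ℝ := fun s => φ (max (√s) r0 + d) with hΨ
  have hargpos : ∀ s : ℝ, 0 < max (√s) r0 + d := fun s => by
    have := le_max_right (√s) r0
    linarith
  have hΨc : Continuous Ψ :=
    hφcont.comp_continuous (by fun_prop) hargpos
  have hxK : ∀ x : EuclideanSpace ℝ (Fin N), r0 ≤ ‖x‖ → x ∈ Kᶜ := fun x hx hxK => by
    linarith [hKR x hxK]
  refine core hN (r0 := r0) (Ψ := Ψ) (u := u) (by linarith) (f_lower hfcont hfpos hliminf) hΨc
    (fun s => hφnonneg _ (hargpos s))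
    (psi_unb hφcont hφnonneg hdiv (by linarith) (by linarith) (by linarith) hΨc fun s => rfl)
    (fun x hx => huC.contDiffAt (hK.isClosed.isOpen_compl.mem_nhds (hxK x hx)))
    (fun x hx => (hu x (hxK x hx)).1) fun x hx => ?_
  obtain ⟨h1, h2⟩ := hu x (hxK x hx)
  refine le_trans ?_ h2
  refine mul_le_mul_of_nonneg_right ?_ (hfpos _ h1).le
  simp only [hΨ]
  rw [Real.sqrt_sq (norm_nonneg x), max_eq_left hx]
  exact hd x hx
end

section
/- Let N ≥ 2, x₀ ∈ ℝ^N, R > 0 and r₀ > 0, and let B = B_R(x₀) be the open ball of radius R centered at x₀. Let φ : (0,∞) → [0,∞) and f : (0,∞) → (0,∞) be continuous functions such that liminf_{t→0⁺} f(t) > 0 and ∫₀¹ r·φ(r) dr = ∞. Then there is no C² positive solution u of the inequality −Δu ≥ φ(dist(x, ∂B)) f(u) on the open annulus {x ∈ ℝ^N : R < |x − x₀| < R + 2r₀}. -/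
open Metric Set MeasureTheory Filter

lemma sdt {h h' : ℝ → ℝ} {c : ℝ} (hd : ∀ᶠ t in nhds (0:ℝ), HasDerivAt h (h' t) t)
    (hc : HasDerivAt h' c 0) (hm : IsLocalMin h 0) : 0 ≤ c := by
  by_contra hneg
  push Not at hneg
  have e1 : deriv h =ᶠ[nhds 0] h' := hd.mono fun t ht => ht.deriv
  have e2 : deriv (deriv h) 0 = c := by rw [e1.deriv_eq, hc.deriv]
  have e3 : deriv h 0 = 0 := hm.deriv_eq_zero
  have hM := isLocalMax_of_deriv_deriv_neg (f := h) (x₀ := 0) (by rw [e2]; exact hneg) e3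
    hd.self_of_nhds.continuousAt
  have e4 : h =ᶠ[nhds 0] fun _ => h 0 := by
    filter_upwards [hm, hM] with t h1 h2
    exact le_antisymm h2 h1
  have e5 : deriv h =ᶠ[nhds 0] deriv (fun _ => h 0) := e4.deriv
  have e6 := e5.deriv_eq
  simp at e6
  linarith

lemma line_u {N : ℕ} {u : EuclideanSpace ℝ (Fin N) → ℝ} {x : EuclideanSpace ℝ (Fin N)}
    (hu : ContDiffAt ℝ 2 u x) (e : EuclideanSpace ℝ (Fin N)) :
    (∀ᶠ t in nhds (0:ℝ), HasDerivAt (fun t : ℝ => u (x + t • e)) (fderiv ℝ u (x + t • e) e) t) ∧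
    HasDerivAt (fun t : ℝ => fderiv ℝ u (x + t • e) e) (iteratedFDeriv ℝ 2 u x ![e, e]) 0 := by
  have hl : ∀ t : ℝ, HasDerivAt (fun t : ℝ => x + t • e) e t := fun t => by
    simpa using ((hasDerivAt_id t).smul_const e).const_add x
  constructor
  · have h1 : ∀ᶠ y in nhds x, DifferentiableAt ℝ u y := by
      filter_upwards [hu.eventually (by simp)] with y hy
      exact hy.differentiableAt (by norm_num)
    have h2 : Tendsto (fun t : ℝ => x + t • e) (nhds 0) (nhds x) := by
      have := (hl 0).continuousAt.tendsto
      simpa using this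
    filter_upwards [h2.eventually h1] with t ht
    exact ht.hasFDerivAt.comp_hasDerivAt t (hl t)
  · rw [iteratedFDeriv_two_apply]
    have h3 : DifferentiableAt ℝ (fderiv ℝ u) x :=
      (hu.fderiv_right (m := 1) (by norm_num)).differentiableAt (by norm_num)
    have h4 : HasFDerivAt (fderiv ℝ u) (fderiv ℝ (fderiv ℝ u) x) (x + (0:ℝ) • e) := by
      simpa using h3.hasFDerivAt
    have h5 := h4.comp_hasDerivAt (0:ℝ) (hl 0)
    have h6 := h5.clm_apply (hasDerivAt_const (0:ℝ) e)
    simpa using h6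

lemma line_g {N : ℕ} {R : ℝ} {g g' g'' : ℝ → ℝ} {y e : EuclideanSpace ℝ (Fin N)}
    (he : ‖e‖ = 1) (hy : R < ‖y‖) (hR : 0 < R)
    (hg : ∀ t, 0 < t → HasDerivAt g (g' t) t) (hg' : ∀ t, 0 < t → HasDerivAt g' (g'' t) t) :
    (∀ᶠ t in nhds (0:ℝ), HasDerivAt (fun t : ℝ => g (‖y + t • e‖ - R))
      (g' (‖y + t • e‖ - R) * ((inner ℝ y e + t) / ‖y + t • e‖)) t) ∧
    HasDerivAt (fun t : ℝ => g' (‖y + t • e‖ - R) * ((inner ℝ y e + t) / ‖y + t • e‖))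
      (g'' (‖y‖ - R) * ((inner ℝ y e)^2 / ‖y‖^2) + 
        g' (‖y‖ - R) * (1 / ‖y‖ - (inner ℝ y e)^2 / ‖y‖^3)) 0 := by
  have hn : ∀ t : ℝ, ‖y + t • e‖ = Real.sqrt (‖y‖^2 + 2 * t * inner ℝ y e + t^2) := by
    intro t
    rw [← Real.sqrt_sq (norm_nonneg (y + t • e)), norm_add_sq_real, norm_smul, he,
      inner_smul_right]
    congr 1
    simp
    ring
  have hd : ∀ t : ℝ, R < ‖y + t • e‖ →
      HasDerivAt (fun t : ℝ => ‖y + t • e‖) ((inner ℝ y e + t) / ‖y + t • e‖) t := by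
    intro t ht
    have hp : 0 < ‖y + t • e‖ := hR.trans ht
    have h1 : HasDerivAt (fun t : ℝ => ‖y‖^2 + 2 * t * inner ℝ y e + t^2)
        (2 * inner ℝ y e + 2 * t) t := by
      have := ((((hasDerivAt_id t).const_mul 2).mul_const (inner ℝ y e)).const_add (‖y‖^2)).add
        ((hasDerivAt_id t).pow 2)
      exact this.congr_deriv (by simp)
    have hne : ‖y‖^2 + 2 * t * inner ℝ y e + t^2 ≠ 0 := by
      intro h0
      rw [hn t, h0] at hp
      simp at hp
    have h2 := h1.sqrt hne
    simp_rw [← hn] at h2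
    convert h2 using 1
    field_simp
  have hc : Continuous (fun t : ℝ => ‖y + t • e‖) := by fun_prop
  have hev : ∀ᶠ t in nhds (0:ℝ), R < ‖y + t • e‖ := by
    apply (hc.tendsto 0).eventually_const_lt
    simpa using hy
  constructor
  · filter_upwards [hev] with t ht
    exact (hg _ (by linarith)).comp t ((hd t ht).sub_const R)
  · have h0 := hd 0 hev.self_of_nhds
    have hpos : 0 < ‖y‖ := hR.trans hy
    have hgg : HasDerivAt g' (g'' (‖y‖ - R)) (‖y + (0:ℝ) • e‖ - R) := by
      simpa using hg' (‖y‖ - R) (by linarith)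
    have h1 := hgg.comp 0 (h0.sub_const R)
    have h2 := ((hasDerivAt_id (0:ℝ)).const_add (inner ℝ y e)).div h0 (by simpa using hpos.ne')
    have h3 := h1.mul h2
    refine h3.congr_deriv ?_
    simp
    field_simp

lemma lap_min {N : ℕ} {x₀ : EuclideanSpace ℝ (Fin N)} {R : ℝ} (hR : 0 < R)
    {u : EuclideanSpace ℝ (Fin N) → ℝ} {g g' g'' : ℝ → ℝ} {x : EuclideanSpace ℝ (Fin N)}
    (hu : ContDiffAt ℝ 2 u x) (hx : R < dist x x₀)
    (hg : ∀ t, 0 < t → HasDerivAt g (g' t) t) (hg' : ∀ t, 0 < t → HasDerivAt g' (g'' t) t)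
    (hm : IsLocalMin (fun y => u y - g (dist y x₀ - R)) x) :
    g'' (dist x x₀ - R) + (N - 1) / dist x x₀ * g' (dist x x₀ - R) ≤ laplacian u x := by
  set y := x - x₀ with hy
  have hd : dist x x₀ = ‖y‖ := dist_eq_norm _ _
  rw [hd] at hx ⊢
  have hpos : 0 < ‖y‖ := hR.trans hx
  have key : ∀ i : Fin N, (g'' (‖y‖ - R) * ((y i)^2 / ‖y‖^2) + 
        g' (‖y‖ - R) * (1 / ‖y‖ - (y i)^2 / ‖y‖^3)) ≤
      iteratedFDeriv ℝ 2 u x ![EuclideanSpace.single i 1, EuclideanSpace.single i 1] := by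
    intro i
    set e : EuclideanSpace ℝ (Fin N) := EuclideanSpace.single i 1 with he
    have hne : ‖e‖ = 1 := by simp [he]
    have hin : inner ℝ y e = y i := by simp [he, EuclideanSpace.inner_single_right]
    obtain ⟨a1, a2⟩ := line_u hu e
    obtain ⟨b1, b2⟩ := line_g hne hx hR hg hg'
    rw [hin] at b2
    have hl : IsLocalMin (fun t : ℝ => u (x + t • e) - g (‖y + t • e‖ - R)) 0 := by
      have hc : Tendsto (fun t : ℝ => x + t • e) (nhds 0) (nhds x) := by
        have : Continuous (fun t : ℝ => x + t • e) := by fun_prop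
        simpa using this.tendsto 0
      have := hc.eventually hm
      filter_upwards [this] with t ht
      have e1 : dist (x + t • e) x₀ = ‖y + t • e‖ := by
        rw [dist_eq_norm, hy]; congr 1; abel
      rw [e1, hd] at ht
      simpa using ht
    have := sdt (h' := fun t => fderiv ℝ u (x + t • e) e -
        (g' (‖y + t • e‖ - R) * ((inner ℝ y e + t) / ‖y + t • e‖))) (by
      filter_upwards [a1, b1] with t h1 h2
      exact h1.sub h2) (by
      rw [hin]
      exact a2.sub b2) hl
    linarith
  have hsum := Finset.sum_le_sum (s := Finset.univ) (fun i _ => key i)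
  have hS : ∑ i, (y i)^2 = ‖y‖^2 := (EuclideanSpace.real_norm_sq_eq y).symm
  refine le_trans (le_of_eq ?_) hsum
  rw [Finset.sum_add_distrib, ← Finset.mul_sum, ← Finset.mul_sum, Finset.sum_sub_distrib,
    ← Finset.sum_div, ← Finset.sum_div Finset.univ _ (‖y‖^3), hS]
  simp
  field_simp

lemma comparison {N : ℕ} {x₀ : EuclideanSpace ℝ (Fin N)} {R r₀ : ℝ} (hR : 0 < R)
    {u : EuclideanSpace ℝ (Fin N) → ℝ} {g g' g'' : ℝ → ℝ}
    (hu : ContDiffOn ℝ 2 u {x | R < dist x x₀ ∧ dist x x₀ < R + 2 * r₀})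
    (hg : ∀ t, 0 < t → HasDerivAt g (g' t) t) (hg' : ∀ t, 0 < t → HasDerivAt g' (g'' t) t)
    {a b : ℝ} (ha : 0 < a) (hb : b < 2 * r₀)
    (hba : ∀ x, dist x x₀ = R + a → g a ≤ u x)
    (hbb : ∀ x, dist x x₀ = R + b → g b ≤ u x)
    (hinterior : ∀ t x, a < t → t < b → dist x x₀ = R + t →
      (∀ y, dist y x₀ = R + t → u x ≤ u y) →
      laplacian u x < g'' t + (N - 1) / (R + t) * g' t)
    (x : EuclideanSpace ℝ (Fin N)) (hx1 : R + a ≤ dist x x₀) (hx2 : dist x x₀ ≤ R + b) :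
    g (dist x x₀ - R) ≤ u x := by
  have hdc : Continuous (fun y : EuclideanSpace ℝ (Fin N) => dist y x₀) := by fun_prop
  set Ω := {x : EuclideanSpace ℝ (Fin N) | R < dist x x₀ ∧ dist x x₀ < R + 2 * r₀} with hΩ
  have hΩo : IsOpen Ω := (isOpen_lt continuous_const hdc).inter (isOpen_lt hdc continuous_const)
  set K := {x : EuclideanSpace ℝ (Fin N) | R + a ≤ dist x x₀ ∧ dist x x₀ ≤ R + b} with hK
  have hKc : IsCompact K := by
    have hcl : IsClosed K :=
      (isClosed_le continuous_const hdc).inter (isClosed_le hdc continuous_const)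
    refine (isCompact_closedBall x₀ (R + b)).of_isClosed_subset hcl ?_
    intro y hy
    exact hy.2
  have hKΩ : K ⊆ Ω := fun y hy => ⟨by linarith [hy.1], by linarith [hy.2]⟩
  have hcont : ContinuousOn (fun y => u y - g (dist y x₀ - R)) K := by
    refine (hu.continuousOn.mono hKΩ).sub ?_
    intro y hy
    have h1 : ContinuousAt g (dist y x₀ - R) := (hg _ (by linarith [hy.1])).continuousAt
    exact (ContinuousAt.comp (f := fun y => dist y x₀ - R) h1 
      (by fun_prop)).continuousWithinAt
  obtain ⟨z, hzK, hz⟩ := hKc.exists_isMinOn ⟨x, hx1, hx2⟩ hcont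
  have hzx : u z - g (dist z x₀ - R) ≤ u x - g (dist x x₀ - R) := hz (show x ∈ K from ⟨hx1, hx2⟩)
  suffices h : 0 ≤ u z - g (dist z x₀ - R) by linarith
  rcases eq_or_lt_of_le hzK.1 with h1 | h1
  · have := hba z h1.symm
    rw [← h1]
    simpa using this
  rcases eq_or_lt_of_le hzK.2 with h2 | h2
  · have := hbb z h2
    rw [h2]
    simpa using this
  exfalso
  have hnhds : K ∈ nhds z := by
    have ho : IsOpen {x : EuclideanSpace ℝ (Fin N) | R + a < dist x x₀ ∧ dist x x₀ < R + b} :=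
      (isOpen_lt continuous_const hdc).inter (isOpen_lt hdc continuous_const)
    exact mem_of_superset (ho.mem_nhds ⟨h1, h2⟩) (fun y hy => ⟨hy.1.le, hy.2.le⟩)
  have hl := hz.isLocalMin hnhds
  have h3 := lap_min hR (hu.contDiffAt (hΩo.mem_nhds (hKΩ hzK))) (by linarith) hg hg' hl
  have h4 := hinterior (dist z x₀ - R) z (by linarith) (by linarith) (by ring) (by
    intro y hy
    have hd : dist y x₀ = dist z x₀ := by linarith
    have := hz (show y ∈ K from ⟨by rw [hd]; exact hzK.1, by rw [hd]; exact hzK.2⟩)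
    simp only [mem_ofPred_eq, hd] at this
    linarith)
  rw [show R + (dist z x₀ - R) = dist z x₀ by ring] at h4
  linarith

lemma infDist_sphere' {N : ℕ} {x₀ x : EuclideanSpace ℝ (Fin N)} {R t : ℝ} (hR : 0 < R)
    (ht : 0 < t) (hx : dist x x₀ = R + t) : infDist x (sphere x₀ R) = t := by
  have hn : ‖x - x₀‖ = R + t := by rw [← dist_eq_norm, hx]
  have hmem : x₀ + (R / (R + t)) • (x - x₀) ∈ sphere x₀ R := by
    rw [mem_sphere, dist_eq_norm, add_sub_cancel_left, norm_smul, hn, Real.norm_eq_abs,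
      abs_of_pos (by positivity)]
    field_simp
  apply le_antisymm
  · refine (infDist_le_dist_of_mem hmem).trans (le_of_eq ?_)
    have : x - (x₀ + (R / (R + t)) • (x - x₀)) = (t / (R + t)) • (x - x₀) := by
      have : (t / (R + t)) = 1 - R / (R + t) := by field_simp; ring
      rw [this, sub_smul, one_smul]; abel
    rw [dist_eq_norm, this, norm_smul, hn, Real.norm_eq_abs, abs_of_pos (by positivity)]
    field_simp
  · rw [le_infDist ⟨_, hmem⟩]
    intro y hy
    have := dist_triangle x y x₀
    rw [mem_sphere.1 hy] at this
    linarith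

/-- the exponential barrier -/
lemma barrier_z (α τ : ℝ) : (∀ t : ℝ, HasDerivAt (fun t => Real.exp (-α * t) - Real.exp (-α * τ))
      (-α * Real.exp (-α * t)) t) ∧
    (∀ t : ℝ, HasDerivAt (fun t => -α * Real.exp (-α * t)) (α^2 * Real.exp (-α * t)) t) := by
  have h : ∀ t : ℝ, HasDerivAt (fun t => Real.exp (-α * t)) (-α * Real.exp (-α * t)) t := by
    intro t
    have := ((hasDerivAt_id t).const_mul (-α)).exp
    exact this.congr_deriv (by simp; ring)
  exact ⟨fun t => (h t).sub_const _, fun t => ((h t).const_mul (-α)).congr_deriv (by ring)⟩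

lemma ii {ψ : ℝ → ℝ} (hψ : ContinuousOn ψ (Ioi 0)) {a b : ℝ} (ha : 0 < a) (hb : 0 < b) :
    IntervalIntegrable ψ volume a b := by
  apply ContinuousOn.intervalIntegrable
  apply hψ.mono
  intro t ht
  exact (lt_min ha hb).trans_le ht.1

lemma dleft {ψ : ℝ → ℝ} (hψ : ContinuousOn ψ (Ioi 0)) {a b : ℝ} (ha : 0 < a) (hb : 0 < b) :
    HasDerivAt (fun t => ∫ s in t..b, ψ s) (-ψ a) a :=
  intervalIntegral.integral_hasDerivAt_left (ii hψ ha hb)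
    (hψ.stronglyMeasurableAtFilter isOpen_Ioi a ha) (hψ.continuousAt (Ioi_mem_nhds ha))

lemma diverge {φ : ℝ → ℝ} (hφ : ContinuousOn φ (Ioi (0:ℝ))) (hφ0 : ∀ r : ℝ, 0 < r → 0 ≤ φ r)
    (hdiv : ¬ IntegrableOn (fun r : ℝ => r * φ r) (Ioo (0:ℝ) 1) volume) {τ : ℝ} (hτ : 0 < τ)
    (δ : ℝ) (hδ : 0 < δ) (C : ℝ) :
    ∃ ε, 0 < ε ∧ ε < δ ∧ C < (∫ s in ε..τ, s * φ s) - ε * ∫ s in ε..τ, φ s := by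
  by_contra hcon
  push Not at hcon
  apply hdiv
  have hψ : ContinuousOn (fun r : ℝ => r * φ r) (Ioi 0) := continuousOn_id.mul hφ
  have h1 : IntegrableOn (fun r : ℝ => r * φ r) (Ioc 0 τ) volume := by
    refine integrableOn_Ioc_of_intervalIntegral_norm_bounded_left (l := atTop)
      (a := fun n : ℕ => 1 / ((n : ℝ) + 1)) (I := 2 * C) ?_ ?_ ?_
    · intro n
      by_cases h : 1 / ((n : ℝ) + 1) ≤ τ
      · exact (intervalIntegrable_iff_integrableOn_Ioc_of_le h).1 (ii hψ (by positivity) hτ)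
      · rw [Ioc_eq_empty (fun hh => h hh.le)]; exact integrableOn_empty
    · exact tendsto_one_div_add_atTop_nhds_zero_nat
    · have : ∀ᶠ n : ℕ in atTop, 1 / ((n : ℝ) + 1) < min δ τ :=
        tendsto_one_div_add_atTop_nhds_zero_nat.eventually_lt_const (lt_min hδ hτ)
      filter_upwards [this] with n hn
      set q := 1 / ((n : ℝ) + 1) with hq
      have hq0 : 0 < q := by positivity
      have hqδ := hn.trans_le (min_le_left _ _)
      have hqτ := hn.trans_le (min_le_right _ _)
      rw [← intervalIntegral.integral_of_le hqτ.le]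
      have hh := hcon (q/2) (by positivity) (by linarith)
      have i1 : IntervalIntegrable (fun s => s * φ s) volume (q/2) τ := ii hψ (by positivity) hτ
      have i2 : IntervalIntegrable φ volume (q/2) τ := ii hφ (by positivity) hτ
      rw [← intervalIntegral.integral_const_mul,
        ← intervalIntegral.integral_sub i1 (i2.const_mul _)] at hh
      have i3 : IntervalIntegrable (fun s => s * φ s - q/2 * φ s) volume (q/2) q :=
        (ii hψ (by positivity) hq0).sub ((ii hφ (by positivity) hq0).const_mul _)
      have i4 : IntervalIntegrable (fun s => s * φ s - q/2 * φ s) volume q τ :=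
        (ii hψ hq0 hτ).sub ((ii hφ hq0 hτ).const_mul _)
      rw [← intervalIntegral.integral_add_adjacent_intervals i3 i4] at hh
      have p1 : 0 ≤ ∫ s in (q/2)..q, (s * φ s - q/2 * φ s) := by
        apply intervalIntegral.integral_nonneg (by linarith)
        intro s hs
        have := hφ0 s (by linarith [hs.1])
        nlinarith [hs.1]
      have p2 : ∫ s in q..τ, ‖s * φ s‖ ≤ ∫ s in q..τ, 2 * (s * φ s - q/2 * φ s) := by
        apply intervalIntegral.integral_mono_on hqτ.le (ii hψ hq0 hτ).norm (i4.const_mul 2)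
        intro s hs
        have h5 := hφ0 s (by linarith [hs.1])
        have h6 : 0 ≤ s := by linarith [hs.1]
        rw [Real.norm_eq_abs, abs_of_nonneg (by positivity)]
        nlinarith [hs.1]
      rw [intervalIntegral.integral_const_mul] at p2
      linarith
  have h2 : IntegrableOn (fun r : ℝ => r * φ r) (Icc τ 1) volume :=
    (hψ.mono (fun s hs => hτ.trans_le hs.1)).integrableOn_Icc
  refine (h1.union h2).mono_set ?_
  intro s hs
  rcases le_or_gt s τ with h | h
  · exact Or.inl ⟨hs.1, h⟩
  · exact Or.inr ⟨h.le, hs.2.le⟩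

/-- Theorem 3.2 (case of a ball): nonexistence in an annulus when the weight is not
integrable at zero. -/
theorem statement_4 {N : ℕ} (hN : 2 ≤ N) (x₀ : EuclideanSpace ℝ (Fin N))
    (R r₀ : ℝ) (hR : 0 < R) (hr₀ : 0 < r₀) (φ f : ℝ → ℝ)
    (hφcont : ContinuousOn φ (Ioi (0:ℝ))) (hφnonneg : ∀ r : ℝ, 0 < r → 0 ≤ φ r)
    (hfcont : ContinuousOn f (Ioi (0:ℝ))) (hfpos : ∀ t : ℝ, 0 < t → 0 < f t)
    (hliminf : ∃ ε : ℝ, 0 < ε ∧ ∀ᶠ t in nhdsWithin (0:ℝ) (Ioi 0), ε ≤ f t)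
    (hdiv : ¬ IntegrableOn (fun r : ℝ => r * φ r) (Ioo (0:ℝ) 1) volume) :
    ¬ ∃ u : EuclideanSpace ℝ (Fin N) → ℝ,
        ContDiffOn ℝ 2 u {x | R < dist x x₀ ∧ dist x x₀ < R + 2 * r₀} ∧
        ∀ x ∈ {x : EuclideanSpace ℝ (Fin N) | R < dist x x₀ ∧ dist x x₀ < R + 2 * r₀},
          0 < u x ∧ φ (infDist x (sphere x₀ R)) * f (u x) ≤ -laplacian u x := by
  rintro ⟨u, hu, hsol⟩
  -- points at prescribed distance
  have hpt : ∀ t : ℝ, 0 < t → ∃ p : EuclideanSpace ℝ (Fin N), dist p x₀ = R + t := by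
    intro t ht
    refine ⟨x₀ + EuclideanSpace.single (⟨0, by omega⟩ : Fin N) (R + t), ?_⟩
    rw [dist_eq_norm, add_sub_cancel_left]
    simp
    linarith
  have hupos : ∀ t x, 0 < t → t < 2 * r₀ → dist x x₀ = R + t → 0 < u x := fun t x h0 h1 hx =>
    (hsol x ⟨by linarith, by linarith⟩).1
  have hlap : ∀ t x, 0 < t → t < 2 * r₀ → dist x x₀ = R + t →
      φ t * f (u x) ≤ - laplacian u x := fun t x h0 h1 hx => by
    have := (hsol x ⟨by linarith, by linarith⟩).2
    rwa [infDist_sphere' hR h0 hx] at this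
  have hN1 : (0:ℝ) ≤ (N:ℝ) - 1 := by
    have : (2:ℝ) ≤ N := by exact_mod_cast hN
    linarith
  set α : ℝ := ((N:ℝ) - 1) / R + 1 with hα
  have hαpos : 0 < α := by positivity
  have hαt : ∀ t : ℝ, 0 < t → ((N:ℝ) - 1) / (R + t) < α := by
    intro t ht
    have : ((N:ℝ) - 1) / (R + t) ≤ ((N:ℝ) - 1) / R :=
      div_le_div_of_nonneg_left hN1 hR (by linarith)
    linarith
  have hbpos : ∀ t : ℝ, 0 < t → 
      0 < α^2 * Real.exp (-α * t) + ((N:ℝ) - 1) / (R + t) * (-α * Real.exp (-α * t)) := by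
    intro t ht
    have h1 := hαt t ht
    have : α^2 * Real.exp (-α * t) + ((N:ℝ) - 1) / (R + t) * (-α * Real.exp (-α * t)) =
      (α - ((N:ℝ) - 1) / (R + t)) * (α * Real.exp (-α * t)) := by ring
    rw [this]
    have h2 := Real.exp_pos (-α * t)
    exact mul_pos (by linarith) (by positivity)
  have hZpos : ∀ s t : ℝ, s < t → 0 < Real.exp (-α * s) - Real.exp (-α * t) := by
    intro s t hst
    rw [sub_pos, Real.exp_lt_exp]
    nlinarith
  have hZle : ∀ s t : ℝ, 0 < s → Real.exp (-α * s) - Real.exp (-α * t) ≤ 1 := by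
    intro s t hs
    have h1 : Real.exp (-α * s) ≤ 1 := Real.exp_le_one_iff.2 (by nlinarith)
    linarith [Real.exp_pos (-α * t)]
  -- Step 1: sphere minima are bounded
  obtain ⟨M, hM⟩ : ∃ M : ℝ, ∀ t x, 0 < t → t < r₀ → dist x x₀ = R + t →
      (∀ y, dist y x₀ = R + t → u x ≤ u y) → u x ≤ M := by
    obtain ⟨p, hp⟩ := hpt r₀ hr₀
    have hz := hZpos r₀ (3/2 * r₀) (by linarith)
    refine ⟨u p / (Real.exp (-α * r₀) - Real.exp (-α * (3/2 * r₀))), ?_⟩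
    intro t x ht0 ht1 hx hmin
    rw [le_div_iff₀ hz]
    have hK := hupos t x ht0 (by linarith) hx
    obtain ⟨d1, d2⟩ := barrier_z α (3/2 * r₀)
    have := comparison hR hu (fun s _ => (d1 s).const_mul (u x)) (fun s _ => (d2 s).const_mul (u x))
      ht0 (b := 3/2 * r₀) (by linarith)
      (by
        intro y hy
        have h1 := hmin y hy
        have h2 := hZle t (3/2 * r₀) ht0
        nlinarith)
      (by
        intro y hy
        have := hupos _ y (by linarith) (by linarith) hy
        simpa using this.le)
      (by
        intro s y hs1 hs2 hy _
        have h1 := hlap s y (by linarith) (by linarith) hy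
        have h2 := hφnonneg s (by linarith)
        have h3 := hfpos _ (hupos s y (by linarith) (by linarith) hy)
        have h4 := mul_pos hK (hbpos s (by linarith))
        have h5 := mul_nonneg h2 h3.le
        linarith)
      p (by linarith) (by linarith)
    rw [hp, show R + r₀ - R = r₀ by ring] at this
    exact this
  obtain ⟨c, hc, hcf⟩ := f_lower hfcont hfpos hliminf M
  -- Step 2: comparison with the potential of the weight
  obtain ⟨p, hp⟩ := hpt (r₀/2) (by linarith)
  have hz := hZpos (r₀/2) r₀ (by linarith)
  set V : ℝ → ℝ := fun t => -((∫ s in t..r₀, s * φ s) - t * ∫ s in t..r₀, φ s) with hV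
  have hψ : ContinuousOn (fun r : ℝ => r * φ r) (Ioi 0) := continuousOn_id.mul hφcont
  have v1 : ∀ t, 0 < t → HasDerivAt V (∫ s in t..r₀, φ s) t := by
    intro t ht
    have := ((dleft hψ ht hr₀).sub ((hasDerivAt_id t).mul (dleft hφcont ht hr₀))).neg
    exact this.congr_deriv (by simp)
  have v2 : ∀ t, 0 < t → HasDerivAt (fun t => ∫ s in t..r₀, φ s) (-φ t) t :=
    fun t ht => dleft hφcont ht hr₀
  obtain ⟨ε, hε0, hε1, hεI⟩ := diverge hφcont hφnonneg hdiv hr₀ (r₀/2) (by linarith)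
    (max 0 ((u p / c - V (r₀/2)) / (Real.exp (-α * (r₀/2)) - Real.exp (-α * r₀))))
  set I := (∫ s in ε..r₀, s * φ s) - ε * ∫ s in ε..r₀, φ s with hI
  have hI0 : 0 < I := (le_max_left _ _).trans_lt hεI
  have hI1 := (le_max_right _ _).trans_lt hεI
  rw [div_lt_iff₀ hz] at hI1
  obtain ⟨d1, d2⟩ := barrier_z α r₀
  have hA : 0 < c * I := mul_pos hc hI0
  have hVε : V ε = -I := rfl
  have := comparison hR hu
      (g := fun t => c * V t + (c * I) * (Real.exp (-α * t) - Real.exp (-α * r₀)))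
      (g' := fun t => c * (∫ s in t..r₀, φ s) + (c * I) * (-α * Real.exp (-α * t)))
      (g'' := fun t => c * (-φ t) + (c * I) * (α^2 * Real.exp (-α * t)))
      (fun s hs => ((v1 s hs).const_mul c).add ((d1 s).const_mul (c * I)))
      (fun s hs => ((v2 s hs).const_mul c).add ((d2 s).const_mul (c * I)))
      hε0 (b := r₀) (by linarith)
      (by
        intro y hy
        have h1 := hupos ε y hε0 (by linarith) hy
        have h2 := hZle ε r₀ hε0
        simp only [hVε]
        nlinarith)
      (by
        intro y hy
        have := hupos _ y (by linarith) (by linarith) hy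
        simpa [hV] using this.le)
      (by
        intro s y hs1 hs2 hy hmin
        have hs : 0 < s := by linarith
        have h1 := hlap s y hs (by linarith) hy
        have h2 := hφnonneg s hs
        have h3 := hcf _ (hupos s y hs (by linarith) hy) (hM s y hs hs2 hy hmin)
        have h4 := mul_pos hA (hbpos s hs)
        have h5 := mul_le_mul_of_nonneg_left h3 h2
        have h6 : 0 ≤ ∫ s in s..r₀, φ s :=
          intervalIntegral.integral_nonneg hs2.le (fun q hq => hφnonneg q (by linarith [hq.1]))
        have h7 : 0 ≤ ((N:ℝ) - 1) / (R + s) * (c * ∫ s in s..r₀, φ s) := by positivity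
        linarith)
      p (by linarith) (by linarith)
  rw [hp, show R + r₀/2 - R = r₀/2 by ring] at this
  have h8 := mul_lt_mul_of_pos_left hI1 hc
  have h9 : c * (u p / c - V (r₀/2)) = u p - c * V (r₀/2) := by field_simp
  rw [h9] at h8
  nlinarith
end

section
/- Let N ≥ 3 and let K = ⋃_{i=1}^k \bar{B}_{ρ_i}(x_i) be a finite union of k ≥ 1 pairwise disjoint closed balls in ℝ^N with radii ρ_i > 0. Let γ ∈ (0,1), let φ : (0,∞) → (0,∞) be nonincreasing and locally γ-Hölder continuous, and let f : (0,∞) → (0,∞) be C¹ and strictly decreasing. Then the inequality −Δu ≥ φ(δ_K(x)) f(u) has a C² positive solution on ℝ^N \ K if and only if ∫₀^∞ r·φ(r) dr < ∞. -/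
open Metric Set MeasureTheory Filter

open scoped Topology

lemma lap_add {N : ℕ} {u v : EuclideanSpace ℝ (Fin N) → ℝ} {x : EuclideanSpace ℝ (Fin N)}
    (hu : ContDiffAt ℝ 2 u x) (hv : ContDiffAt ℝ 2 v x) :
    laplacian (fun y => u y + v y) x = laplacian u x + laplacian v x := by
  unfold laplacian
  rw [← Finset.sum_add_distrib]
  refine Finset.sum_congr rfl fun i _ => ?_
  have := iteratedFDeriv_add_apply (i := 2) hu hv
  change iteratedFDeriv ℝ 2 (u + v) x _ = _
  rw [this]; rfl

lemma lap_sub {N : ℕ} {u v : EuclideanSpace ℝ (Fin N) → ℝ} {x : EuclideanSpace ℝ (Fin N)}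
    (hu : ContDiffAt ℝ 2 u x) (hv : ContDiffAt ℝ 2 v x) :
    laplacian (fun y => u y - v y) x = laplacian u x - laplacian v x := by
  unfold laplacian
  rw [← Finset.sum_sub_distrib]
  refine Finset.sum_congr rfl fun i _ => ?_
  have := iteratedFDeriv_sub_apply (i := 2) hu hv
  change iteratedFDeriv ℝ 2 (u - v) x _ = _
  rw [this]; rfl

lemma lap_const {N : ℕ} (a : ℝ) (x : EuclideanSpace ℝ (Fin N)) :
    laplacian (fun _ => a) x = 0 := by
  unfold laplacian
  simp [iteratedFDeriv_const_of_ne]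

lemma lap_smul {N : ℕ} {u : EuclideanSpace ℝ (Fin N) → ℝ} {x : EuclideanSpace ℝ (Fin N)}
    (a : ℝ) (hu : ContDiffAt ℝ 2 u x) :
    laplacian (fun y => a * u y) x = a * laplacian u x := by
  unfold laplacian
  rw [Finset.mul_sum]
  refine Finset.sum_congr rfl fun i _ => ?_
  have := iteratedFDeriv_const_smul_apply (i := 2) (a := a) hu
  change iteratedFDeriv ℝ 2 (a • u) x _ = _
  rw [this]; rfl

lemma lap_sum {N : ℕ} {ι : Type*} (s : Finset ι) {u : ι → EuclideanSpace ℝ (Fin N) → ℝ}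
    {x : EuclideanSpace ℝ (Fin N)} (hu : ∀ i ∈ s, ContDiffAt ℝ 2 (u i) x) :
    laplacian (fun y => ∑ i ∈ s, u i y) x = ∑ i ∈ s, laplacian (u i) x := by
  classical
  induction s using Finset.induction_on with
  | empty => simpa using lap_const 0 x
  | insert a s ha ih =>
    simp only [Finset.sum_insert ha]
    rw [lap_add (hu a (Finset.mem_insert_self a s)), ih]
    · intro i hi; exact hu i (Finset.mem_insert_of_mem hi)
    · exact ContDiffAt.sum fun i hi => hu i (Finset.mem_insert_of_mem hi)

/-- Laplacian of a function whose derivative is known near the point. -/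
lemma lap_of_hasFDeriv {N : ℕ} {u : EuclideanSpace ℝ (Fin N) → ℝ}
    {x : EuclideanSpace ℝ (Fin N)} {G : EuclideanSpace ℝ (Fin N) → (EuclideanSpace ℝ (Fin N) →L[ℝ] ℝ)}
    {H : EuclideanSpace ℝ (Fin N) →L[ℝ] (EuclideanSpace ℝ (Fin N) →L[ℝ] ℝ)}
    (h1 : ∀ᶠ y in 𝓝 x, HasFDerivAt u (G y) y) (h2 : HasFDerivAt G H x) :
    laplacian u x = ∑ i, H (EuclideanSpace.single i 1) (EuclideanSpace.single i 1) := by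
  unfold laplacian
  refine Finset.sum_congr rfl fun i _ => ?_
  rw [iteratedFDeriv_two_apply]
  have : fderiv ℝ u =ᶠ[𝓝 x] G := h1.mono fun y hy => hy.fderiv
  rw [this.fderiv_eq, h2.fderiv]
  rfl

lemma second_deriv_nonneg_s5 {g : ℝ → ℝ} (h : IsLocalMin g 0) (hc : ContinuousAt g 0) :
    0 ≤ deriv (deriv g) 0 := by
  by_contra hneg
  push Not at hneg
  have hm : IsLocalMax g 0 := isLocalMax_of_deriv_deriv_neg hneg h.deriv_eq_zero hc
  have he : g =ᶠ[𝓝 0] fun _ => g 0 := by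
    filter_upwards [h, hm] with y hy hy2
    exact le_antisymm hy2 hy
  have h2 : deriv g =ᶠ[𝓝 0] fun _ => 0 := by
    have := he.deriv
    simpa using this
  rw [h2.deriv_eq] at hneg
  simp at hneg

lemma lap_nonneg_of_min {N : ℕ} {u : EuclideanSpace ℝ (Fin N) → ℝ}
    {x : EuclideanSpace ℝ (Fin N)} (hu : ContDiffAt ℝ 2 u x) (h : IsLocalMin u x) :
    0 ≤ laplacian u x := by
  unfold laplacian
  refine Finset.sum_nonneg fun i _ => ?_
  rw [iteratedFDeriv_two_apply]
  set e : EuclideanSpace ℝ (Fin N) := EuclideanSpace.single i 1 with he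
  change 0 ≤ (fderiv ℝ (fderiv ℝ u) x) e e
  have hl : ∀ t : ℝ, HasDerivAt (fun t : ℝ => x + t • e) e t := by
    intro t
    simpa using ((hasDerivAt_id t).smul_const e).const_add x
  have hl0 : ContinuousAt (fun t : ℝ => x + t • e) 0 := (hl 0).continuousAt
  have hten : Tendsto (fun t : ℝ => x + t • e) (𝓝 0) (𝓝 x) := by
    simpa [ContinuousAt] using hl0
  have hdiff : ∀ᶠ y in 𝓝 x, DifferentiableAt ℝ u y := by
    filter_upwards [hu.eventually (by simp)] with y hy
    exact hy.differentiableAt (by norm_num)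
  have hd1 : deriv (fun t : ℝ => u (x + t • e)) =ᶠ[𝓝 0] fun t => fderiv ℝ u (x + t • e) e := by
    filter_upwards [hten.eventually hdiff] with t ht
    exact (ht.hasFDerivAt.comp_hasDerivAt t (hl t)).deriv
  have hfd : DifferentiableAt ℝ (fderiv ℝ u) x :=
    (hu.fderiv_right (m := 1) (by norm_num)).differentiableAt (by norm_num)
  have hfd' : HasFDerivAt (fderiv ℝ u) (fderiv ℝ (fderiv ℝ u) x) (x + (0:ℝ) • e) := by
    simpa using hfd.hasFDerivAt
  have hd2 : HasDerivAt (fun t : ℝ => fderiv ℝ u (x + t • e) e)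
      ((fderiv ℝ (fderiv ℝ u) x) e e) 0 := by
    have h3 := hfd'.comp_hasDerivAt (0:ℝ) (hl 0)
    have := h3.clm_apply (hasDerivAt_const (0:ℝ) e)
    simpa using this
  rw [← hd2.deriv, ← hd1.deriv_eq]
  apply second_deriv_nonneg_s5
  · have : ∀ᶠ y in 𝓝 x, u x ≤ u y := h
    change ∀ᶠ t in 𝓝 (0:ℝ), u (x + (0:ℝ) • e) ≤ u (x + t • e)
    simpa using hten.eventually this
  · have : ContinuousAt u (x + (0:ℝ) • e) := by simpa using hu.continuousAt
    exact ContinuousAt.comp (f := fun t : ℝ => x + t • e) (g := u) this hl0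

lemma norm_hasFDeriv {N : ℕ} {c y : EuclideanSpace ℝ (Fin N)} (hy : 0 < ‖y - c‖) :
    HasFDerivAt (fun z => ‖z - c‖) ((1 / ‖y - c‖) • innerSL ℝ (y - c)) y := by
  have h1 : HasFDerivAt (fun z => ‖z - c‖ ^ 2) (2 • innerSL ℝ (y - c)) y := by
    have := ((hasFDerivAt_id y).sub_const c).norm_sq
    exact this.congr_fderiv (by ext; simp)
  have h2 := h1.sqrt (by positivity)
  have h3 : (fun z => √(‖z - c‖ ^ 2)) = fun z => ‖z - c‖ := by
    ext z; exact Real.sqrt_sq (norm_nonneg _)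
  rw [h3] at h2
  refine h2.congr_fderiv ?_
  ext z
  simp
  field_simp

/-- Radial functions: `C²` regularity and Laplacian. -/
lemma radial_lap {m : ℕ} {c x : EuclideanSpace ℝ (Fin (m + 2))} {ρ : ℝ} (hρ : 0 < ρ)
    {v Q ψ : ℝ → ℝ} (hv : ∀ r, ρ < r → HasDerivAt v (-(Q r / r ^ (m + 1))) r)
    (hQ : ∀ r, ρ < r → HasDerivAt Q (r ^ (m + 1) * ψ r) r) (hψ : ContinuousOn ψ (Ioi ρ))
    (hx : ρ < ‖x - c‖) :
    ContDiffAt ℝ 2 (fun y => v ‖y - c‖) x ∧ laplacian (fun y => v ‖y - c‖) x = - ψ ‖x - c‖ := by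
  have hx0 : 0 < ‖x - c‖ := hρ.trans hx
  constructor
  · have hQ1 : ContDiffOn ℝ 1 Q (Ioi ρ) := by
      rw [show (1 : WithTop ℕ∞) = 0 + 1 by norm_num, contDiffOn_succ_iff_deriv_of_isOpen isOpen_Ioi]
      refine ⟨fun r hr => (hQ r hr).differentiableAt.differentiableWithinAt, by simp, ?_⟩
      rw [contDiffOn_zero]
      refine ContinuousOn.congr (f := fun r => r ^ (m + 1) * ψ r) ?_ fun r hr => (hQ r hr).deriv
      exact (continuous_pow _).continuousOn.mul hψ
    have hv2 : ContDiffOn ℝ 2 v (Ioi ρ) := by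
      rw [show (2 : WithTop ℕ∞) = 1 + 1 by norm_num, contDiffOn_succ_iff_deriv_of_isOpen isOpen_Ioi]
      refine ⟨fun r hr => (hv r hr).differentiableAt.differentiableWithinAt, by simp, ?_⟩
      refine ContDiffOn.congr (f := fun r => -(Q r / r ^ (m + 1))) ?_ fun r hr => (hv r hr).deriv
      refine (hQ1.div (contDiff_id.pow _).contDiffOn ?_).neg
      intro r hr
      exact pow_ne_zero _ (hρ.trans hr).ne'
    have h1 : ContDiffAt ℝ 2 v ‖x - c‖ := hv2.contDiffAt (Ioi_mem_nhds hx)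
    have h2 : ContDiffAt ℝ 2 (fun y => ‖y - c‖) x :=
      (contDiffAt_id.sub contDiffAt_const).norm ℝ (by simpa using hx0)
    exact ContDiffAt.comp x h1 h2
  · have hcont : Continuous fun y : EuclideanSpace ℝ (Fin (m + 2)) => ‖y - c‖ := by fun_prop
    have hev : ∀ᶠ y in 𝓝 x, ρ < ‖y - c‖ := hcont.continuousAt.eventually (lt_mem_nhds hx)
    have hg : HasDerivAt (fun r => -(Q r / r ^ (m + 2)))
        (-(ψ ‖x - c‖ / ‖x - c‖) + (m + 2) * Q ‖x - c‖ / ‖x - c‖ ^ (m + 3)) ‖x - c‖ := by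
      have := ((hQ _ hx).div (hasDerivAt_pow (m + 2) ‖x - c‖) (by positivity)).neg
      refine this.congr_deriv ?_
      push_cast
      simp only [pow_succ]
      field_simp
      ring
    have h1 : ∀ᶠ y in 𝓝 x, HasFDerivAt (fun y => v ‖y - c‖)
        ((-(Q ‖y - c‖ / ‖y - c‖ ^ (m + 2))) • innerSL ℝ (y - c)) y := by
      filter_upwards [hev] with y hy
      have hy0 : 0 < ‖y - c‖ := hρ.trans hy
      have := (hv _ hy).comp_hasFDerivAt y (norm_hasFDeriv hy0)
      refine this.congr_fderiv ?_
      rw [smul_smul]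
      congr 1
      simp only [pow_succ]
      field_simp
    have h2 := (hg.comp_hasFDerivAt x (norm_hasFDeriv hx0)).smul
      (((innerSL ℝ (E := EuclideanSpace ℝ (Fin (m + 2)))).hasFDerivAt (x := x - c)).comp x
        ((hasFDerivAt_id x).sub_const c))
    rw [lap_of_hasFDeriv h1 h2]
    have key : ∑ i, (x - c) i * (x - c) i = ‖x - c‖ ^ 2 := by
      rw [EuclideanSpace.norm_sq_eq]
      simp [sq]
    have hin : ∀ (z : EuclideanSpace ℝ (Fin (m + 2))) (i : Fin (m + 2)),
        (innerSL ℝ z) (EuclideanSpace.single i (1:ℝ)) = z i := by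
      intro z i
      rw [innerSL_apply_apply, EuclideanSpace.inner_single_right]
      simp
    have hterm : ∀ A B r : ℝ, ∀ i : Fin (m + 2),
        (A • (innerSL ℝ (E := EuclideanSpace ℝ (Fin (m + 2)))) (EuclideanSpace.single i (1:ℝ)))
          (EuclideanSpace.single i 1) +
        ((B • (1 / r) • innerSL ℝ (x - c)) (EuclideanSpace.single i 1)) *
          (innerSL ℝ (x - c)) (EuclideanSpace.single i 1) =
        A + B / r * ((x - c) i * (x - c) i) := by
      intro A B r i
      simp only [smul_apply, hin, smul_eq_mul]
      simp
      ring
    refine (Finset.sum_congr rfl fun i _ => hterm _ _ _ i).trans ?_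
    rw [Finset.sum_add_distrib, ← Finset.mul_sum, key]
    simp only [Function.comp_apply, Finset.sum_const, Finset.card_univ, Fintype.card_fin,
      nsmul_eq_mul]
    push_cast
    simp only [pow_succ]
    field_simp
    ring

noncomputable def Qf (φ : ℝ → ℝ) (ρ : ℝ) (m : ℕ) (r0 r : ℝ) : ℝ :=
  ∫ s in r0..r, s ^ (m + 1) * φ (s - ρ)

noncomputable def wf (φ : ℝ → ℝ) (ρ : ℝ) (m : ℕ) (r0 r : ℝ) : ℝ :=
  (-(∫ s in r0..r, s * φ (s - ρ)) + Qf φ ρ m r0 r / r ^ m) / m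

lemma cont_shift {φ : ℝ → ℝ} {ρ : ℝ} (hφ : ContinuousOn φ (Ioi 0)) :
    ContinuousOn (fun s => φ (s - ρ)) (Ioi ρ) := by
  refine hφ.comp (by fun_prop) ?_
  intro s hs
  simpa using hs

lemma uIcc_sub_Ioi {ρ a b : ℝ} (ha : ρ < a) (hb : ρ < b) : uIcc a b ⊆ Ioi ρ := by
  intro s hs
  exact lt_of_lt_of_le (lt_min ha hb) hs.1

lemma deriv_int {g : ℝ → ℝ} {ρ r0 r : ℝ} (hg : ContinuousOn g (Ioi ρ)) (h0 : ρ < r0)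
    (hr : ρ < r) : HasDerivAt (fun t => ∫ s in r0..t, g s) (g r) r := by
  apply intervalIntegral.integral_hasDerivAt_right
  · exact (hg.mono (uIcc_sub_Ioi h0 hr)).intervalIntegrable
  · exact hg.stronglyMeasurableAtFilter isOpen_Ioi r hr
  · exact hg.continuousAt (Ioi_mem_nhds hr)

lemma Qf_deriv {φ : ℝ → ℝ} {ρ r0 r : ℝ} {m : ℕ} (hφ : ContinuousOn φ (Ioi 0)) (h0 : ρ < r0)
    (hr : ρ < r) : HasDerivAt (Qf φ ρ m r0) (r ^ (m + 1) * φ (r - ρ)) r := by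
  refine deriv_int (g := fun s => s ^ (m + 1) * φ (s - ρ)) ?_ h0 hr
  exact (continuous_pow _).continuousOn.mul (cont_shift hφ)

lemma wf_deriv {φ : ℝ → ℝ} {ρ r0 r : ℝ} {m : ℕ} (hm : 1 ≤ m) (hρ : 0 < ρ)
    (hφ : ContinuousOn φ (Ioi 0)) (h0 : ρ < r0)
    (hr : ρ < r) : HasDerivAt (wf φ ρ m r0) (-(Qf φ ρ m r0 r / r ^ (m + 1))) r := by
  have hr0 : 0 < r := hρ.trans hr
  have hm0 : (m : ℝ) ≠ 0 := by positivity
  have h1 : HasDerivAt (fun t => ∫ s in r0..t, s * φ (s - ρ)) (r * φ (r - ρ)) r :=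
    deriv_int (g := fun s => s * φ (s - ρ)) (continuousOn_id.mul (cont_shift hφ)) h0 hr
  have h2 := (h1.neg.add ((Qf_deriv (m := m) hφ h0 hr).div (hasDerivAt_pow m r)
    (by positivity))).div_const (m : ℝ)
  refine h2.congr_deriv ?_
  obtain ⟨n, rfl⟩ : ∃ n, m = n + 1 := ⟨m - 1, by omega⟩
  simp only [pow_succ, Nat.add_sub_cancel]
  field_simp
  ring

lemma wf_eq {φ : ℝ → ℝ} {ρ r0 r : ℝ} {m : ℕ} (hm : 1 ≤ m) (hρ : 0 < ρ)
    (hφ : ContinuousOn φ (Ioi 0)) (h0 : ρ < r0) (hr : ρ < r) :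
    m * wf φ ρ m r0 r = ∫ s in r0..r, φ (s - ρ) * (s * ((s / r) ^ m - 1)) := by
  have hr0 : 0 < r := hρ.trans hr
  have hm0 : (m : ℝ) ≠ 0 := by positivity
  have hs := cont_shift (ρ := ρ) hφ
  have hsub := uIcc_sub_Ioi h0 hr
  unfold wf Qf
  rw [mul_div_cancel₀ _ hm0, ← intervalIntegral.integral_div, neg_add_eq_sub,
    ← intervalIntegral.integral_sub]
  · apply intervalIntegral.integral_congr
    intro s _
    simp only [div_pow, pow_succ]
    field_simp
  · exact ((((continuous_pow _).continuousOn.mul hs).mono hsub).intervalIntegrable).div_const _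
  · exact ((continuousOn_id.mul hs).mono hsub).intervalIntegrable

lemma wf_nonpos {φ : ℝ → ℝ} {ρ r0 r : ℝ} {m : ℕ} (hm : 1 ≤ m) (hρ : 0 < ρ)
    (hφ : ContinuousOn φ (Ioi 0)) (hpos : ∀ r : ℝ, 0 < r → 0 < φ r) (h0 : ρ < r0) (hr : ρ < r) :
    wf φ ρ m r0 r ≤ 0 := by
  have hm0 : (0 : ℝ) < m := by positivity
  have hr0 : 0 < r := hρ.trans hr
  have : m * wf φ ρ m r0 r ≤ 0 := by
    rw [wf_eq hm hρ hφ h0 hr]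
    rcases le_total r0 r with h | h
    · rw [← neg_nonneg, ← intervalIntegral.integral_neg]
      apply intervalIntegral.integral_nonneg h
      intro s hs
      have h1 := hpos (s - ρ) (by linarith [hs.1])
      have hs0 : 0 < s := by linarith [hs.1]
      have h2 : (s / r) ^ m ≤ 1 := pow_le_one₀ (by positivity) ((div_le_one hr0).2 hs.2)
      rw [← mul_neg, ← mul_neg]
      exact mul_nonneg h1.le (mul_nonneg hs0.le (by linarith))
    · rw [intervalIntegral.integral_symm, neg_nonpos]
      apply intervalIntegral.integral_nonneg h
      intro s hs
      have h1 := hpos (s - ρ) (by linarith [hs.1])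
      have hs0 : 0 < s := by linarith [hs.1]
      have h2 : 1 ≤ (s / r) ^ m := one_le_pow₀ ((one_le_div hr0).2 hs.1)
      exact mul_nonneg h1.le (mul_nonneg hs0.le (by linarith))
  by_contra hcon
  push Not at hcon
  nlinarith [mul_pos hm0 hcon]

lemma compare {m : ℕ} {c : EuclideanSpace ℝ (Fin (m + 2))} {ρ T r0 r1 : ℝ} (hρ : 0 < ρ)
    {v Q φ f : ℝ → ℝ} (hφ : ContinuousOn φ (Ioi 0)) (hφpos : ∀ r : ℝ, 0 < r → 0 < φ r)
    (hfanti : StrictAntiOn f (Ioi (0:ℝ)))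
    (hv : ∀ r, ρ < r → HasDerivAt v (-(Q r / r ^ (m + 1))) r)
    (hQ : ∀ r, ρ < r → HasDerivAt Q (r ^ (m + 1) * (f T * φ (r - ρ))) r)
    (hr0 : ρ < r0) (hr1 : ρ < r1) (hv0 : v r0 ≤ 0) (hv1 : v r1 ≤ 0)
    (hvT : ∀ r ∈ uIcc r0 r1, v r ≤ T)
    {u : EuclideanSpace ℝ (Fin (m + 2)) → ℝ}
    (hu : ∀ x, ‖x - c‖ ∈ uIcc r0 r1 → ContDiffAt ℝ 2 u x ∧ 0 < u x ∧
      φ (‖x - c‖ - ρ) * f (u x) ≤ -laplacian u x) :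
    ∀ x, ‖x - c‖ ∈ uIcc r0 r1 → v ‖x - c‖ ≤ u x := by
  intro x hx
  have hsub := uIcc_sub_Ioi hr0 hr1
  have hψ : ContinuousOn (fun r => f T * φ (r - ρ)) (Ioi ρ) :=
    continuousOn_const.mul (cont_shift hφ)
  have hrad : ∀ y, ‖y - c‖ ∈ uIcc r0 r1 → ContDiffAt ℝ 2 (fun y => v ‖y - c‖) y ∧
      laplacian (fun y => v ‖y - c‖) y = -(f T * φ (‖y - c‖ - ρ)) := fun y hy =>
    radial_lap hρ hv hQ hψ (hsub hy)
  set A : Set (EuclideanSpace ℝ (Fin (m + 2))) := {y | ‖y - c‖ ∈ uIcc r0 r1} with hA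
  have hcn : Continuous fun y : EuclideanSpace ℝ (Fin (m + 2)) => ‖y - c‖ := by fun_prop
  have hAc : IsCompact A := by
    have hcl : IsClosed A := isClosed_Icc.preimage hcn
    refine (isCompact_closedBall c (max r0 r1)).of_isClosed_subset hcl ?_
    intro y hy
    rw [mem_closedBall, dist_eq_norm]
    exact hy.2
  have hcont : ContinuousOn (fun y => u y - v ‖y - c‖) A := fun y hy =>
    ((hu y hy).1.continuousAt.sub (hrad y hy).1.continuousAt).continuousWithinAt
  obtain ⟨z, hzA, hz⟩ := hAc.exists_isMinOn ⟨x, hx⟩ hcont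
  by_contra hlt
  push Not at hlt
  have hz1 : u z - v ‖z - c‖ < 0 := lt_of_le_of_lt (hz hx) (by simpa using hlt)
  obtain ⟨hzC, hzpos, hzl⟩ := hu z hzA
  have hne0 : ‖z - c‖ ≠ r0 := by intro h; rw [h] at hz1; linarith
  have hne1 : ‖z - c‖ ≠ r1 := by intro h; rw [h] at hz1; linarith
  have hzi : ‖z - c‖ ∈ Ioo (min r0 r1) (max r0 r1) := by
    refine ⟨lt_of_le_of_ne hzA.1 ?_, lt_of_le_of_ne hzA.2 ?_⟩
    · rcases min_choice r0 r1 with h | h <;> rw [h]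
      · exact hne0.symm
      · exact hne1.symm
    · rcases max_choice r0 r1 with h | h <;> rw [h] <;> assumption
  have hloc : IsLocalMin (fun y => u y - v ‖y - c‖) z := by
    have : ∀ᶠ y in 𝓝 z, ‖y - c‖ ∈ Ioo (min r0 r1) (max r0 r1) :=
      hcn.continuousAt.eventually (isOpen_Ioo.mem_nhds hzi)
    filter_upwards [this] with y hy
    exact hz (Ioo_subset_Icc_self hy)
  have hlap := lap_nonneg_of_min (hzC.sub (hrad z hzA).1) hloc
  rw [lap_sub hzC (hrad z hzA).1, (hrad z hzA).2] at hlap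
  have hT : u z < T := by linarith [hvT _ hzA]
  have hf := hfanti (mem_Ioi.2 hzpos) (mem_Ioi.2 (hzpos.trans hT)) hT
  have hp := hφpos (‖z - c‖ - ρ) (by have := hsub hzA; simpa using this)
  nlinarith [mul_lt_mul_of_pos_left hf hp]

lemma core_s5 {m : ℕ} (hm : 1 ≤ m) {c : EuclideanSpace ℝ (Fin (m + 2))} {ρ r0 rs A B : ℝ} (hρ : 0 < ρ)
    {φ f : ℝ → ℝ} (hφ : ContinuousOn φ (Ioi 0)) (hφpos : ∀ r : ℝ, 0 < r → 0 < φ r)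
    (hfanti : StrictAntiOn f (Ioi (0:ℝ))) (hfpos : ∀ t : ℝ, 0 < t → 0 < f t)
    (hr0 : ρ < r0) (hrs : ρ < rs) (hη0 : A + B / r0 ^ m = 0) (hηs : 0 < A + B / rs ^ m)
    {u : EuclideanSpace ℝ (Fin (m + 2)) → ℝ} :
    ∃ C : ℝ, ∀ r1, ρ < r1 → rs ∈ uIcc r0 r1 → (∀ r ∈ uIcc r0 r1, A + B / r ^ m ≤ 1) →
      (∀ x, ‖x - c‖ ∈ uIcc r0 r1 → ContDiffAt ℝ 2 u x ∧ 0 < u x ∧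
        φ (‖x - c‖ - ρ) * f (u x) ≤ -laplacian u x) → -C ≤ wf φ ρ m r0 r1 := by
  have hm0 : (0 : ℝ) < m := by positivity
  obtain ⟨xs, hxs⟩ : ∃ x : EuclideanSpace ℝ (Fin (m + 2)), ‖x - c‖ = rs := by
    refine ⟨c + EuclideanSpace.single 0 rs, ?_⟩
    simp [abs_of_pos (hρ.trans hrs)]
  set η := A + B / rs ^ m with hη
  set T : ℝ := max 1 ((u xs - f 1 * wf φ ρ m r0 rs + 1) / η) with hT
  have hT1 : 1 ≤ T := le_max_left _ _
  have hT2 : u xs - f 1 * wf φ ρ m r0 rs + 1 ≤ T * η := by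
    rw [← div_le_iff₀ hηs]; exact le_max_right _ _
  have hT0 : 0 < T := by linarith
  have hfT := hfpos T hT0
  have hfT1 : f T ≤ f 1 := hfanti.antitoneOn (mem_Ioi.2 one_pos) (mem_Ioi.2 hT0) hT1
  refine ⟨T / f T, fun r1 hr1 hmem hle hu => ?_⟩
  by_contra hcon
  push Not at hcon
  have hcon' : f T * wf φ ρ m r0 r1 ≤ -T := by
    have := mul_le_mul_of_nonneg_left hcon.le hfT.le
    have h2 : f T * -(T / f T) = -T := by field_simp
    linarith
  have hsub := uIcc_sub_Ioi hr0 hr1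
  have key := compare (v := fun r => f T * wf φ ρ m r0 r + T * (A + B / r ^ m))
    (Q := fun r => f T * Qf φ ρ m r0 r + T * B * m) (T := T) (f := f) (r0 := r0) (r1 := r1)
    hρ hφ hφpos hfanti ?_ ?_ hr0 hr1 ?_ ?_ ?_ hu xs (by rw [hxs]; exact hmem)
  · simp only [hxs] at key
    have hwn := wf_nonpos hm hρ hφ hφpos hr0 hrs
    have : f 1 * wf φ ρ m r0 rs ≤ f T * wf φ ρ m r0 rs := by nlinarith
    linarith
  · intro r hr
    have hrp : 0 < r := hρ.trans hr
    have h1 := (wf_deriv hm hρ hφ hr0 hr).const_mul (f T)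
    have h2 := ((((hasDerivAt_const r B).div (hasDerivAt_pow m r) (by positivity)).const_add
      A).const_mul T)
    refine (h1.add h2).congr_deriv ?_
    obtain ⟨n, rfl⟩ : ∃ n, m = n + 1 := ⟨m - 1, by omega⟩
    simp only [pow_succ, Nat.add_sub_cancel]
    push_cast
    field_simp
    ring
  · intro r hr
    refine (((Qf_deriv (m := m) hφ hr0 hr).const_mul (f T)).add_const (T * B * m)).congr_deriv ?_
    ring
  · have hw0 : wf φ ρ m r0 r0 = 0 := by simp [wf, Qf]
    simp only [hw0, hη0]; simp
  · have := hle r1 right_mem_uIcc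
    nlinarith
  · intro r hr
    have := hle r hr
    have hwn := wf_nonpos hm hρ hφ hφpos hr0 (hsub hr)
    nlinarith

lemma cont_rphi {φ : ℝ → ℝ} (hφ : ContinuousOn φ (Ioi 0)) :
    ContinuousOn (fun r => r * φ r) (Ioi 0) := continuousOn_id.mul hφ

lemma intOn_Ioc {φ : ℝ → ℝ} (hφ : ContinuousOn φ (Ioi 0)) {a b : ℝ} (ha : 0 < a) :
    IntegrableOn (fun r => r * φ r) (Ioc a b) volume := by
  have : IntegrableOn (fun r => r * φ r) (Icc a b) volume :=
    ((cont_rphi hφ).mono fun x hx => lt_of_lt_of_le ha hx.1).integrableOn_Icc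
  exact this.mono_set Ioc_subset_Icc_self

lemma shift_int (φ : ℝ → ℝ) (ρ a b : ℝ) :
    ∫ s in (a + ρ)..(b + ρ), (s - ρ) * φ (s - ρ) = ∫ t in a..b, t * φ t := by
  rw [intervalIntegral.integral_comp_sub_right (fun t => t * φ t) ρ]
  simp

lemma kern_cont {φ : ℝ → ℝ} {ρ : ℝ} (hφ : ContinuousOn φ (Ioi 0)) (r : ℝ) (m : ℕ) :
    ContinuousOn (fun s => φ (s - ρ) * (s * ((s / r) ^ m - 1))) (Ioi ρ) := by
  refine (cont_shift hφ).mul (Continuous.continuousOn ?_)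
  fun_prop

lemma near_int {φ : ℝ → ℝ} {ρ r0 rs C : ℝ} {m : ℕ} (hm : 1 ≤ m) (hρ : 0 < ρ)
    (hφ : ContinuousOn φ (Ioi 0)) (hpos : ∀ r : ℝ, 0 < r → 0 < φ r) (h0 : ρ < r0) (hrs : ρ < rs)
    (hC : ∀ r, ρ < r → r < rs → -C ≤ wf φ ρ m r0 r) :
    IntegrableOn (fun r => r * φ r) (Ioc 0 (r0 - ρ)) volume := by
  have hm0 : (0 : ℝ) < m := by positivity
  have ha : Tendsto (fun n : ℕ => 1 / ((n : ℝ) + 1)) atTop (𝓝 0) :=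
    tendsto_one_div_add_atTop_nhds_zero_nat
  refine integrableOn_Ioc_of_intervalIntegral_norm_bounded_left (I := 2 * (m * C))
    (l := atTop) (a := fun n : ℕ => 1 / ((n : ℝ) + 1)) ?_ ha ?_
  · intro n
    exact intOn_Ioc hφ (by positivity)
  · filter_upwards [ha.eventually (gt_mem_nhds (sub_pos.2 h0)),
      ha.eventually (gt_mem_nhds (sub_pos.2 hrs))] with n h1 h2
    have hapos : 0 < 1 / ((n : ℝ) + 1) := by positivity
    set a := 1 / ((n : ℝ) + 1)
    set r := ρ + a / 2 with hr
    have hrρ : ρ < r := by linarith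
    have hr0 : 0 < r := by linarith
    have hw := hC r hrρ (by linarith)
    have hweq := wf_eq hm hρ hφ h0 hrρ
    rw [intervalIntegral.integral_symm] at hweq
    have hI : ∫ s in r..r0, φ (s - ρ) * (s * ((s / r) ^ m - 1)) ≤ m * C := by nlinarith
    have hnn : ∀ s, r ≤ s → (s - r) ≤ s * ((s / r) ^ m - 1) := by
      intro s hs
      have h1 : 1 ≤ s / r := (one_le_div hr0).2 hs
      have h2 : s / r ≤ (s / r) ^ m := le_self_pow₀ h1 (by omega)
      have h3 : s - r ≤ s * (s / r - 1) := by
        have : s * (s / r - 1) - (s - r) = (s - r) ^ 2 / r := by field_simp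
        have : 0 ≤ (s - r) ^ 2 / r := by positivity
        linarith
      have : 0 ≤ s := by linarith
      nlinarith
    have hnorm : ∫ x in Ioc a (r0 - ρ), ‖x * φ x‖ = ∫ t in a..(r0 - ρ), t * φ t := by
      rw [intervalIntegral.integral_of_le h1.le]
      refine setIntegral_congr_fun measurableSet_Ioc ?_
      intro x hx
      have hx0 : 0 < x := hapos.trans hx.1
      exact Real.norm_of_nonneg (mul_pos hx0 (hpos x hx0)).le
    rw [hnorm, ← shift_int φ ρ a (r0 - ρ), sub_add_cancel]
    have hkc := kern_cont (ρ := ρ) hφ r m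
    have hi1 : IntervalIntegrable (fun s => φ (s - ρ) * (s * ((s / r) ^ m - 1))) volume r r0 :=
      (hkc.mono (uIcc_sub_Ioi hrρ h0)).intervalIntegrable
    have haρ : ρ < a + ρ := by linarith
    have hi2 : IntervalIntegrable (fun s => φ (s - ρ) * (s * ((s / r) ^ m - 1))) volume (a + ρ) r0 :=
      (hkc.mono (uIcc_sub_Ioi haρ h0)).intervalIntegrable
    have hi3 : IntervalIntegrable (fun s => φ (s - ρ) * (s * ((s / r) ^ m - 1))) volume r (a + ρ) :=
      (hkc.mono (uIcc_sub_Ioi hrρ haρ)).intervalIntegrable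
    have hadd := intervalIntegral.integral_add_adjacent_intervals hi3 hi2
    have hpart : 0 ≤ ∫ s in r..(a + ρ), φ (s - ρ) * (s * ((s / r) ^ m - 1)) := by
      apply intervalIntegral.integral_nonneg (by linarith)
      intro s hs
      have := hnn s hs.1
      exact mul_nonneg (hpos _ (by linarith [hs.1])).le (by linarith [hs.1])
    have hcmp : ∫ s in (a + ρ)..r0, (s - ρ) * φ (s - ρ) ≤
        ∫ s in (a + ρ)..r0, 2 * (φ (s - ρ) * (s * ((s / r) ^ m - 1))) := by
      apply intervalIntegral.integral_mono_on (by linarith)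
      · refine ContinuousOn.intervalIntegrable ?_
        exact ((by fun_prop : ContinuousOn (fun s => s - ρ) (Ioi ρ)).mul (cont_shift hφ)).mono
          (uIcc_sub_Ioi haρ h0)
      · exact hi2.const_mul 2
      · intro s hs
        have h3 := hnn s (by linarith [hs.1])
        have h4 := hpos (s - ρ) (by linarith [hs.1])
        have h5 : s - ρ ≤ 2 * (s * ((s / r) ^ m - 1)) := by linarith [hs.1]
        nlinarith
    rw [intervalIntegral.integral_const_mul] at hcmp
    linarith

lemma far_int {φ : ℝ → ℝ} {ρ r0 rs C : ℝ} {m : ℕ} (hm : 1 ≤ m) (hρ : 0 < ρ)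
    (hφ : ContinuousOn φ (Ioi 0)) (hpos : ∀ r : ℝ, 0 < r → 0 < φ r) (h0 : ρ < r0)
    (hC : ∀ r, rs ≤ r → r0 ≤ r → -C ≤ wf φ ρ m r0 r) :
    IntegrableOn (fun r => r * φ r) (Ioi (r0 - ρ)) volume := by
  have hm0 : (0 : ℝ) < m := by positivity
  refine integrableOn_Ioi_of_intervalIntegral_norm_bounded (I := 2 * (m * C))
    (l := atTop) (b := fun n : ℕ => (n : ℝ)) (r0 - ρ) ?_ tendsto_natCast_atTop_atTop ?_
  · intro n
    exact intOn_Ioc hφ (by linarith)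
  · filter_upwards [tendsto_natCast_atTop_atTop.eventually (eventually_ge_atTop (r0 - ρ)),
      tendsto_natCast_atTop_atTop.eventually (eventually_ge_atTop rs)] with n h1 h2
    set b : ℝ := (n : ℝ)
    set r := 2 * (b + ρ) with hr
    have hrρ : ρ < r := by linarith
    have hr0 : 0 < r := by linarith
    have hw := hC r (by linarith) (by linarith)
    have hweq := wf_eq hm hρ hφ h0 hrρ
    have hI : ∫ s in r0..r, -(φ (s - ρ) * (s * ((s / r) ^ m - 1))) ≤ m * C := by
      rw [intervalIntegral.integral_neg]; nlinarith
    have hnorm : ∫ x in (r0 - ρ)..b, ‖x * φ x‖ = ∫ t in (r0 - ρ)..b, t * φ t := by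
      refine intervalIntegral.integral_congr ?_
      intro x hx
      rw [uIcc_of_le h1] at hx
      have hx0 : 0 < x := by linarith [hx.1]
      exact Real.norm_of_nonneg (mul_pos hx0 (hpos x hx0)).le
    rw [hnorm, ← shift_int φ ρ (r0 - ρ) b, sub_add_cancel]
    have hkc := (kern_cont (ρ := ρ) hφ r m).neg
    have hbρ : ρ < b + ρ := by linarith
    have hi2 : IntervalIntegrable (fun s => -(φ (s - ρ) * (s * ((s / r) ^ m - 1)))) volume r0 (b + ρ) :=
      (hkc.mono (uIcc_sub_Ioi h0 hbρ)).intervalIntegrable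
    have hi3 : IntervalIntegrable (fun s => -(φ (s - ρ) * (s * ((s / r) ^ m - 1)))) volume (b + ρ) r :=
      (hkc.mono (uIcc_sub_Ioi hbρ hrρ)).intervalIntegrable
    have hadd := intervalIntegral.integral_add_adjacent_intervals hi2 hi3
    have hpart : 0 ≤ ∫ s in (b + ρ)..r, -(φ (s - ρ) * (s * ((s / r) ^ m - 1))) := by
      apply intervalIntegral.integral_nonneg (by linarith)
      intro s hs
      have hs0 : 0 < s := by linarith [hs.1]
      have h2 : (s / r) ^ m ≤ 1 := pow_le_one₀ (by positivity) ((div_le_one hr0).2 hs.2)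
      rw [← mul_neg, ← mul_neg]
      exact mul_nonneg (hpos _ (by linarith [hs.1])).le (mul_nonneg hs0.le (by linarith))
    have hcmp : ∫ s in r0..(b + ρ), (s - ρ) * φ (s - ρ) ≤
        ∫ s in r0..(b + ρ), 2 * -(φ (s - ρ) * (s * ((s / r) ^ m - 1))) := by
      apply intervalIntegral.integral_mono_on (by linarith)
      · refine ContinuousOn.intervalIntegrable ?_
        exact ((by fun_prop : ContinuousOn (fun s => s - ρ) (Ioi ρ)).mul (cont_shift hφ)).mono
          (uIcc_sub_Ioi h0 hbρ)
      · exact hi2.const_mul 2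
      · intro s hs
        have hs0 : 0 < s := by linarith [hs.1]
        have h4 := hpos (s - ρ) (by linarith [hs.1])
        have h6 : s / r ≤ 1 / 2 := by
          rw [div_le_iff₀ hr0]; linarith [hs.2]
        have h7 : (s / r) ^ m ≤ s / r :=
          pow_le_of_le_one (by positivity) (by linarith) (by omega)
        have h5 : s - ρ ≤ 2 * (s * (1 - (s / r) ^ m)) := by nlinarith
        nlinarith
    rw [intervalIntegral.integral_const_mul] at hcmp
    linarith

lemma wf_lower {φ : ℝ → ℝ} {ρ : ℝ} {m : ℕ} (hm : 1 ≤ m) (hρ : 0 < ρ)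
    (hφ : ContinuousOn φ (Ioi 0)) (hpos : ∀ r : ℝ, 0 < r → 0 < φ r)
    (hint : IntegrableOn (fun r : ℝ => r * φ r) (Ioi (0:ℝ)) volume) :
    ∃ C : ℝ, ∀ r, ρ < r → -C ≤ wf φ ρ m (ρ + 1) r := by
  have hm0 : (0 : ℝ) < m := by positivity
  set I := ∫ t in Ioi (0:ℝ), t * φ t with hI
  have hI0 : 0 ≤ I := setIntegral_nonneg measurableSet_Ioi fun t ht =>
    (mul_pos ht (hpos t ht)).le
  have hbd : ∀ a b, ρ < a → a ≤ b → ∫ s in a..b, (s - ρ) * φ (s - ρ) ≤ I := by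
    intro a b ha hab
    have := shift_int φ ρ (a - ρ) (b - ρ)
    rw [sub_add_cancel, sub_add_cancel] at this
    rw [this, intervalIntegral.integral_of_le (by linarith)]
    refine setIntegral_mono_set hint ?_ (Eventually.of_forall fun t ht => ?_)
    · refine (ae_restrict_iff' measurableSet_Ioi).2 (Eventually.of_forall fun t ht => ?_)
      exact (mul_pos ht (hpos t ht)).le
    · exact lt_trans (by linarith) ht.1
  set D : ℝ := ((ρ + 1) / ρ) ^ m * m with hD
  have hD0 : 0 < D := by positivity
  refine ⟨((1 + ρ) + D) * I / m, fun r hr => ?_⟩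
  have h0 : ρ < ρ + 1 := by linarith
  have hr0 : 0 < r := by linarith
  have hweq := wf_eq hm hρ hφ h0 hr
  have hcs : ∀ a b, ρ < a → ρ < b →
      IntervalIntegrable (fun s => (s - ρ) * φ (s - ρ)) volume a b := by
    intro a b ha hb
    exact (((by fun_prop : ContinuousOn (fun s => s - ρ) (Ioi ρ)).mul (cont_shift hφ)).mono
          (uIcc_sub_Ioi ha hb)).intervalIntegrable
  have hks : ∀ a b, ρ < a → ρ < b →
      IntervalIntegrable (fun s => φ (s - ρ) * (s * ((s / r) ^ m - 1))) volume a b := by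
    intro a b ha hb
    exact ((kern_cont hφ r m).mono (uIcc_sub_Ioi ha hb)).intervalIntegrable
  rw [neg_le_iff_add_nonneg, ← mul_nonneg_iff_of_pos_left hm0, mul_add, hweq,
    mul_div_cancel₀ _ hm0.ne']
  rcases le_total (ρ + 1) r with h | h
  · have hcmp : ∫ s in (ρ + 1)..r, (-(1 + ρ)) * ((s - ρ) * φ (s - ρ)) ≤
        ∫ s in (ρ + 1)..r, φ (s - ρ) * (s * ((s / r) ^ m - 1)) := by
      apply intervalIntegral.integral_mono_on h ((hcs _ _ h0 hr).const_mul _) (hks _ _ h0 hr)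
      intro s hs
      have hs0 : 0 < s := by linarith [hs.1]
      have h4 := hpos (s - ρ) (by linarith [hs.1])
      have h6 : 0 ≤ (s / r) ^ m := by positivity
      have h7 : -((1 + ρ) * (s - ρ)) ≤ s * ((s / r) ^ m - 1) := by nlinarith [hs.1]
      nlinarith
    rw [intervalIntegral.integral_const_mul] at hcmp
    have := hbd _ _ h0 h
    nlinarith
  · rw [intervalIntegral.integral_symm]
    have hcmp : ∫ s in r..(ρ + 1), φ (s - ρ) * (s * ((s / r) ^ m - 1)) ≤
        ∫ s in r..(ρ + 1), D * ((s - ρ) * φ (s - ρ)) := by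
      apply intervalIntegral.integral_mono_on h (hks _ _ hr h0) ((hcs _ _ hr h0).const_mul _)
      intro s hs
      have hs0 : 0 < s := by linarith [hs.1]
      have h4 := hpos (s - ρ) (by linarith [hs.1])
      have hb := one_add_mul_le_pow (a := r / s - 1) (by
        have : 0 ≤ r / s := by positivity
        linarith) m
      have hb2 : 1 - (r / s) ^ m ≤ m * ((s - r) / s) := by
        have e1 : 1 + (r / s - 1) = r / s := by ring
        have e2 : (s - r) / s = 1 - r / s := by field_simp
        rw [e1] at hb; rw [e2]; linarith
      have e3 : (s / r) ^ m - 1 = (s / r) ^ m * (1 - (r / s) ^ m) := by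
        rw [mul_sub, ← mul_pow]
        have : s / r * (r / s) = 1 := by field_simp
        rw [this]; simp
      have h8 : (s / r) ^ m ≤ ((ρ + 1) / ρ) ^ m := by
        apply pow_le_pow_left₀ (by positivity)
        exact div_le_div₀ (by linarith) hs.2 hρ hr.le
      have h9 : (s / r) ^ m - 1 ≤ D * ((s - r) / s) := by
        rw [e3, hD, mul_assoc]
        have : 0 ≤ (m : ℝ) * ((s - r) / s) :=
          mul_nonneg hm0.le (div_nonneg (by linarith [hs.1]) hs0.le)
        calc (s / r) ^ m * (1 - (r / s) ^ m) ≤ (s / r) ^ m * (m * ((s - r) / s)) :=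
              mul_le_mul_of_nonneg_left hb2 (by positivity)
          _ ≤ _ := mul_le_mul_of_nonneg_right h8 this
      have h10 : s * ((s / r) ^ m - 1) ≤ D * (s - ρ) := by
        calc s * ((s / r) ^ m - 1) ≤ s * (D * ((s - r) / s)) :=
              mul_le_mul_of_nonneg_left h9 hs0.le
          _ = D * (s - r) := by field_simp
          _ ≤ _ := by nlinarith
      nlinarith
    rw [intervalIntegral.integral_const_mul] at hcmp
    have := hbd _ _ hr h
    nlinarith

lemma infDist_le_ball {N : ℕ} {c x : EuclideanSpace ℝ (Fin N)} {ρ : ℝ} (hρ : 0 < ρ)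
    {K : Set (EuclideanSpace ℝ (Fin N))} (hK : closedBall c ρ ⊆ K) (hx : ρ < ‖x - c‖) :
    infDist x K ≤ ‖x - c‖ - ρ := by
  have hx0 : 0 < ‖x - c‖ := hρ.trans hx
  have hy : c + (ρ / ‖x - c‖) • (x - c) ∈ closedBall c ρ := by
    rw [mem_closedBall, dist_eq_norm, add_sub_cancel_left, norm_smul, norm_div, norm_norm,
      div_mul_cancel₀ _ hx0.ne', Real.norm_of_nonneg hρ.le]
  refine (infDist_le_dist_of_mem (hK hy)).trans ?_
  have : x - (c + (ρ / ‖x - c‖) • (x - c)) = (1 - ρ / ‖x - c‖) • (x - c) := by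
    rw [sub_smul, one_smul]; abel
  rw [dist_eq_norm, this, norm_smul, Real.norm_of_nonneg, sub_mul, one_mul,
    div_mul_cancel₀ _ hx0.ne']
  rw [sub_nonneg, div_le_one hx0]; exact hx.le

lemma necessity {m : ℕ} (hm : 1 ≤ m) {c : EuclideanSpace ℝ (Fin (m + 2))} {ρ ε R : ℝ}
    (hρ : 0 < ρ) (hε : 0 < ε) (hR : ρ < R)
    {φ f : ℝ → ℝ} (hφ : ContinuousOn φ (Ioi 0)) (hφpos : ∀ r : ℝ, 0 < r → 0 < φ r)
    (hfanti : StrictAntiOn f (Ioi (0:ℝ))) (hfpos : ∀ t : ℝ, 0 < t → 0 < f t)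
    {u : EuclideanSpace ℝ (Fin (m + 2)) → ℝ}
    (hu : ∀ x, (ρ < ‖x - c‖ ∧ ‖x - c‖ ≤ ρ + ε) ∨ R ≤ ‖x - c‖ → ContDiffAt ℝ 2 u x ∧ 0 < u x ∧
        φ (‖x - c‖ - ρ) * f (u x) ≤ -laplacian u x) :
    IntegrableOn (fun r : ℝ => r * φ r) (Ioi (0:ℝ)) volume := by
  have hnear : IntegrableOn (fun r => r * φ r) (Ioc 0 (ρ + ε - ρ)) volume := by
    have h0 : ρ < ρ + ε := by linarith
    have hs : ρ < ρ + ε / 2 := by linarith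
    obtain ⟨C, hC⟩ := core_s5 (c := c) (A := -(ρ ^ m / (ρ + ε) ^ m)) (B := ρ ^ m) (rs := ρ + ε / 2)
      (u := u) hm hρ hφ hφpos hfanti hfpos h0 hs (by ring) (by
        have : ρ ^ m / (ρ + ε) ^ m < ρ ^ m / (ρ + ε / 2) ^ m := by
          apply div_lt_div_of_pos_left (by positivity) (by positivity)
          exact pow_lt_pow_left₀ (by linarith) (by positivity) (by omega)
        linarith)
    refine near_int (C := C) hm hρ hφ hφpos h0 hs fun r hr1 hr2 => hC r hr1 ?_ ?_ ?_
    · rw [uIcc_of_ge (by linarith)]; exact ⟨hr2.le, by linarith⟩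
    · intro t ht
      rw [uIcc_of_ge (by linarith)] at ht
      have h1 : 0 ≤ ρ ^ m / (ρ + ε) ^ m := by positivity
      have h2 : ρ ^ m / t ^ m ≤ 1 := by
        rw [← div_pow]
        have ht0 : 0 < t := by linarith [ht.1]
        exact pow_le_one₀ (by positivity) ((div_le_one ht0).2 (by linarith [ht.1]))
      linarith
    · intro x hx
      rw [uIcc_of_ge (by linarith)] at hx
      exact hu x (Or.inl ⟨by linarith [hx.1], hx.2⟩)
  have hfar : IntegrableOn (fun r => r * φ r) (Ioi (R - ρ)) volume := by
    have hR0 : 0 < R := by linarith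
    obtain ⟨C, hC⟩ := core_s5 (c := c) (A := 1) (B := -R ^ m) (rs := R + 1)
      (u := u) hm hρ hφ hφpos hfanti hfpos hR (by linarith) (by field_simp; ring) (by
        have : R ^ m / (R + 1) ^ m < 1 := by
          rw [div_lt_one (by positivity)]
          exact pow_lt_pow_left₀ (by linarith) (by positivity) (by omega)
        rw [neg_div]; linarith)
    refine far_int (C := C) (rs := R + 1) hm hρ hφ hφpos hR fun r hr1 hr2 =>
      hC r (by linarith) ?_ ?_ ?_
    · rw [uIcc_of_le (by linarith)]; exact ⟨by linarith, hr1⟩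
    · intro t ht
      rw [uIcc_of_le (by linarith)] at ht
      have ht0 : 0 < t := by linarith [ht.1]
      have : 0 ≤ R ^ m / t ^ m := by positivity
      rw [neg_div]; linarith
    · intro x hx
      rw [uIcc_of_le (by linarith)] at hx
      exact hu x (Or.inr hx.1)
  have hmid : IntegrableOn (fun r => r * φ r) (Ioc (ρ + ε - ρ) (R - ρ)) volume :=
    intOn_Ioc hφ (by linarith)
  refine ((hnear.union hmid).union hfar).mono_set ?_
  intro x hx
  by_cases h1 : x ≤ ρ + ε - ρ
  · exact Or.inl (Or.inl ⟨hx, h1⟩)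
  · by_cases h2 : x ≤ R - ρ
    · exact Or.inl (Or.inr ⟨not_le.1 h1, h2⟩)
    · exact Or.inr (not_le.1 h2)

/-- Theorem 3.4 (for a finite union of disjoint closed balls): existence of a `C²` positive
solution of `-Δu ≥ φ(δ_K(x)) f(u)` outside `K` iff `∫₀^∞ r φ(r) dr < ∞`. -/
theorem statement_5 {N : ℕ} (hN : 3 ≤ N) (k : ℕ) (hk : 1 ≤ k)
    (c : Fin k → EuclideanSpace ℝ (Fin N)) (ρ : Fin k → ℝ) (hρ : ∀ i, 0 < ρ i)
    (hdisj : Pairwise fun i j => Disjoint (closedBall (c i) (ρ i)) (closedBall (c j) (ρ j)))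
    (γ : NNReal) (hγ0 : 0 < γ) (hγ1 : γ < 1) (φ f : ℝ → ℝ)
    (hφpos : ∀ r : ℝ, 0 < r → 0 < φ r) (hφanti : AntitoneOn φ (Ioi (0:ℝ)))
    (hφhold : ∀ s : Set ℝ, IsCompact s → s ⊆ Ioi (0:ℝ) → ∃ C : NNReal, HolderOnWith C γ φ s)
    (hf : ContDiffOn ℝ 1 f (Ioi (0:ℝ))) (hfanti : StrictAntiOn f (Ioi (0:ℝ)))
    (hfpos : ∀ t : ℝ, 0 < t → 0 < f t) :
    (∃ u : EuclideanSpace ℝ (Fin N) → ℝ,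
        ContDiffOn ℝ 2 u (⋃ i, closedBall (c i) (ρ i))ᶜ ∧
        ∀ x ∈ (⋃ i, closedBall (c i) (ρ i))ᶜ,
          0 < u x ∧ φ (infDist x (⋃ i, closedBall (c i) (ρ i))) * f (u x) ≤ -laplacian u x) ↔
      IntegrableOn (fun r : ℝ => r * φ r) (Ioi (0:ℝ)) volume := by
  obtain ⟨m, rfl⟩ : ∃ m, N = m + 2 := ⟨N - 2, by omega⟩
  have hm : 1 ≤ m := by omega
  have hφ : ContinuousOn φ (Ioi 0) := by
    intro x hx
    have hx0 : (0:ℝ) < x := hx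
    obtain ⟨C, hC⟩ := hφhold (Icc (x / 2) (2 * x)) isCompact_Icc
      (fun y hy => lt_of_lt_of_le (by positivity : (0:ℝ) < x / 2) hy.1)
    have h1 := hC.continuousOn hγ0
    exact (h1.continuousAt (Icc_mem_nhds (by linarith) (by linarith))).continuousWithinAt
  set K : Set (EuclideanSpace ℝ (Fin (m + 2))) := ⋃ i, closedBall (c i) (ρ i) with hKdef
  have hKc : IsCompact K := isCompact_iUnion fun i => isCompact_closedBall _ _
  have hKo : IsOpen Kᶜ := hKc.isClosed.isOpen_compl
  have hsubK : ∀ i, closedBall (c i) (ρ i) ⊆ K := fun i =>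
    subset_iUnion (fun i => closedBall (c i) (ρ i)) i
  set i0 : Fin k := ⟨0, hk⟩
  have hKne : K.Nonempty := ⟨c i0, hsubK i0 (mem_closedBall_self (hρ i0).le)⟩
  have hout : ∀ x ∈ Kᶜ, ∀ i, ρ i < ‖x - c i‖ := by
    intro x hx i
    by_contra h
    push Not at h
    exact hx (hsubK i (by rwa [mem_closedBall, dist_eq_norm]))
  have hdpos : ∀ x ∈ Kᶜ, 0 < infDist x K := fun x hx =>
    (hKc.isClosed.notMem_iff_infDist_pos hKne).1 hx
  constructor
  · rintro ⟨u, huC, hu⟩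
    have hsup : ∀ x ∈ Kᶜ, ContDiffAt ℝ 2 u x ∧ 0 < u x ∧
        φ (‖x - c i0‖ - ρ i0) * f (u x) ≤ -laplacian u x := by
      intro x hx
      obtain ⟨h1, h2⟩ := hu x hx
      refine ⟨huC.contDiffAt (hKo.mem_nhds hx), h1, le_trans ?_ h2⟩
      have h3 := hout x hx i0
      have h4 := infDist_le_ball (hρ i0) (hsubK i0) h3
      exact mul_le_mul_of_nonneg_right
        (hφanti (hdpos x hx) (mem_Ioi.2 (by linarith)) h4) (hfpos _ h1).le
    set K' : Set (EuclideanSpace ℝ (Fin (m + 2))) :=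
      ⋃ j : {j : Fin k // j ≠ i0}, closedBall (c j) (ρ j) with hK'
    have hK'c : IsClosed K' :=
      (isCompact_iUnion fun i => isCompact_closedBall _ _).isClosed
    have hdis : Disjoint (closedBall (c i0) (ρ i0)) K' := by
      rw [hK', disjoint_iUnion_right]
      intro j
      exact hdisj j.2.symm
    obtain ⟨ε, hε, hεd⟩ := hdis.exists_cthickenings (isCompact_closedBall _ _) hK'c
    obtain ⟨R, hR⟩ := hKc.isBounded.subset_closedBall (c i0)
    refine necessity (c := c i0) (ρ := ρ i0) (ε := ε) (R := max (ρ i0) R + 1) (u := u) (f := f)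
      hm (hρ i0) hε (by linarith [le_max_left (ρ i0) R]) hφ hφpos hfanti hfpos ?_
    intro x hx
    apply hsup x
    rcases hx with ⟨h1, h2⟩ | h1
    · intro hxK
      obtain ⟨j, hj⟩ := mem_iUnion.1 hxK
      by_cases hji : j = i0
      · subst hji
        rw [mem_closedBall, dist_eq_norm] at hj
        linarith
      · have hxt : x ∈ cthickening ε (closedBall (c i0) (ρ i0)) := by
          rw [cthickening_closedBall hε.le (hρ i0).le, mem_closedBall, dist_eq_norm]
          linarith
        have hx' : x ∈ cthickening ε K' :=
          self_subset_cthickening _ (mem_iUnion.2 ⟨⟨j, hji⟩, hj⟩)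
        exact disjoint_left.1 hεd hxt hx'
    · intro hxK
      have := hR hxK
      rw [mem_closedBall, dist_eq_norm] at this
      linarith [le_max_right (ρ i0) R]
  · intro hint
    choose C hC using fun i => wf_lower (m := m) hm (hρ i) hφ hφpos hint
    have hf1 := hfpos 1 one_pos
    have hrad : ∀ x ∈ Kᶜ, ∀ i,
        ContDiffAt ℝ 2 (fun y => wf φ (ρ i) m (ρ i + 1) ‖y - c i‖) x ∧
        laplacian (fun y => wf φ (ρ i) m (ρ i + 1) ‖y - c i‖) x = -φ (‖x - c i‖ - ρ i) := by
      intro x hx i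
      have h0 : ρ i < ρ i + 1 := by linarith
      exact radial_lap (ψ := fun r => φ (r - ρ i)) (Q := Qf φ (ρ i) m (ρ i + 1)) (hρ i)
        (fun r hr => wf_deriv hm (hρ i) hφ h0 hr)
        (fun r hr => Qf_deriv hφ h0 hr) (cont_shift hφ) (hout x hx i)
    have hterm : ∀ x ∈ Kᶜ, ∀ i ∈ (Finset.univ : Finset (Fin k)),
        ContDiffAt ℝ 2 (fun y => wf φ (ρ i) m (ρ i + 1) ‖y - c i‖ + C i) x := fun x hx i _ =>
      (hrad x hx i).1.add contDiffAt_const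
    have hsum : ∀ x ∈ Kᶜ,
        ContDiffAt ℝ 2 (fun y => ∑ i, (wf φ (ρ i) m (ρ i + 1) ‖y - c i‖ + C i)) x := fun x hx =>
      ContDiffAt.sum (hterm x hx)
    refine ⟨fun y => 1 + f 1 * ∑ i, (wf φ (ρ i) m (ρ i + 1) ‖y - c i‖ + C i), ?_, ?_⟩
    · intro x hx
      exact (contDiffAt_const.add (contDiffAt_const.mul (hsum x hx))).contDiffWithinAt
    · intro x hx
      have hge : 0 ≤ ∑ i, (wf φ (ρ i) m (ρ i + 1) ‖x - c i‖ + C i) :=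
        Finset.sum_nonneg fun i _ => by linarith [hC i _ (hout x hx i)]
      have h1u : 1 ≤ 1 + f 1 * ∑ i, (wf φ (ρ i) m (ρ i + 1) ‖x - c i‖ + C i) := by
        have := mul_nonneg hf1.le hge
        linarith
      refine ⟨by linarith, ?_⟩
      have hlap : laplacian (fun y => 1 + f 1 * ∑ i, (wf φ (ρ i) m (ρ i + 1) ‖y - c i‖ + C i)) x
          = f 1 * ∑ i, -φ (‖x - c i‖ - ρ i) := by
        rw [lap_add contDiffAt_const (contDiffAt_const.mul (hsum x hx)), lap_const,
          lap_smul _ (hsum x hx), lap_sum _ (hterm x hx), zero_add]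
        congr 1
        refine Finset.sum_congr rfl fun i _ => ?_
        rw [lap_add (hrad x hx i).1 contDiffAt_const, lap_const, (hrad x hx i).2, add_zero]
      rw [hlap, Finset.sum_neg_distrib, mul_neg, neg_neg]
      obtain ⟨y, hyK, hy⟩ := hKc.exists_infDist_eq_dist hKne x
      obtain ⟨i, hi⟩ := mem_iUnion.1 hyK
      have hle : ‖x - c i‖ - ρ i ≤ infDist x K := by
        rw [hy]
        rw [mem_closedBall] at hi
        have := dist_triangle x y (c i)
        rw [dist_eq_norm x (c i)] at this
        linarith
      have hxi := hout x hx i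
      have hφle : φ (infDist x K) ≤ φ (‖x - c i‖ - ρ i) :=
        hφanti (mem_Ioi.2 (by linarith)) (hdpos x hx) hle
      have hφsum : φ (‖x - c i‖ - ρ i) ≤ ∑ i, φ (‖x - c i‖ - ρ i) :=
        Finset.single_le_sum (f := fun i => φ (‖x - c i‖ - ρ i))
          (fun j _ => (hφpos _ (by linarith [hout x hx j])).le) (Finset.mem_univ i)
      have hfle : f (1 + f 1 * ∑ i, (wf φ (ρ i) m (ρ i + 1) ‖x - c i‖ + C i)) ≤ f 1 :=
        hfanti.antitoneOn (mem_Ioi.2 one_pos) (mem_Ioi.2 (by linarith)) h1u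
      have hp := hφpos _ (hdpos x hx)
      calc _ ≤ φ (infDist x K) * f 1 := mul_le_mul_of_nonneg_left hfle hp.le
        _ ≤ (∑ i, φ (‖x - c i‖ - ρ i)) * f 1 :=
          mul_le_mul_of_nonneg_right (hφle.trans hφsum) hf1.le
        _ = _ := mul_comm _ _
end
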